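/- arXiv:2110.01156 — 3 statements merged into one kernel-verified Lean document; each statement's English description precedes it below -/
import Mathlib

section
/- There exist a constant C > 0 and an integer N such that for all n ≥ N and all integers 1 ≤ k ≤ n, |M_{n,k} − β_n · s_{n,k}| ≤ C · β_n · |s_{n,k}| · (log n)/n; that is, M_{n,k} = β_n s_{n,k} (1 + O(n^{−1} log n)) uniformly in 1 ≤ k ≤ n. -/
open Finset

/-- A set partition of `Fin n`: a finite family of nonempty blocks such that
every element lies in exactly one block. -/
def IsSetPartition {n : ℕ} (P : Finset (Finset (Fin n))) : Prop :=
  (∀ B ∈ P, B.Nonempty) ∧ ∀ x : Fin n, ∃! B, B ∈ P ∧ x ∈ B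

/-- The Bell number `B n`: the number of set partitions of an `n`-element set. -/
noncomputable def bell (n : ℕ) : ℕ :=
  Nat.card {P : Finset (Finset (Fin n)) // IsSetPartition P}

/-- `beta n`: the number of set partitions of an `n`-element set with no singleton blocks. -/
noncomputable def beta (n : ℕ) : ℕ :=
  Nat.card {P : Finset (Finset (Fin n)) // IsSetPartition P ∧ ∀ B ∈ P, 2 ≤ B.card}

/-- Signed Stirling numbers of the first kind, defined by
`∑ k, stirS n k * z ^ k = z (z-1) ⋯ (z-n+1)`. -/
def stirS : ℕ → ℕ → ℤ
  | 0, 0 => 1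
  | 0, _ + 1 => 0
  | _ + 1, 0 => 0
  | n + 1, k + 1 => stirS n k - (n : ℤ) * stirS n (k + 1)

/-- Unsigned Stirling numbers of the first kind (number of permutations of `n`
elements with `k` cycles). -/
def stirU : ℕ → ℕ → ℕ
  | 0, 0 => 1
  | 0, _ + 1 => 0
  | _ + 1, 0 => 0
  | n + 1, k + 1 => stirU n k + n * stirU n (k + 1)

/-- The Matsunaga numbers `M n k`, defined by the recurrence
`M n k = n * M (n-1) k + beta n * stirS n k` for `1 ≤ k ≤ n`, and `0` whenever
`n ≤ 1`, `k ≤ 0` or `k > n`. -/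
noncomputable def matsunaga : ℕ → ℕ → ℤ
  | 0, _ => 0
  | 1, _ => 0
  | n + 2, k =>
      if 1 ≤ k ∧ k ≤ n + 2 then
        ((n : ℤ) + 2) * matsunaga (n + 1) k + (beta (n + 2) : ℤ) * stirS (n + 2) k
      else 0

/-!
Relative to the main term `T n k = β_n s_{n,k}`, the recurrence `M (n+1) = (n+1) M n + T (n+1)`
damps its past as soon as `(n + 1) |T n k| ≤ ε_n |T (n+1) k|` with `ε_n → 0`: first `M = O(T)`
uniformly in `k`, and then, feeding this bound back in once, `M = T (1 + O(ε))`.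

Since `n |s_{n,k}| ≤ |s_{n+1,k}|`, it suffices that `β_n / β_{n+1} = O(log n / n)`. Adding a new
element to a block of a partition counted by `β_n` is injective and keeps the blocks nonsingleton,
so `β_{n+1} / β_n` is at least the average number of blocks. At most `m ^ n` partitions have at most
`m` blocks, while distributing `n - 2K` elements among `K` fixed pairs gives `K ^ (n - 2K) ≤ β_n`.
With `K = 16 m` and `m` about `n / (16 log n)` this shows that at least half of the partitions have
more than `m` blocks.
-/

open Filter Topology

section SetPartitions

/-- The equivalence relations on `α` in which every element is related to another one: these encode
the set partitions of `α` without singleton blocks. -/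
def nonsingletonSetoids (α : Type*) : Set (Setoid α) :=
  {r | ∀ x, ∃ y, y ≠ x ∧ r x y}

open Classical in
/-- The family of equivalence classes of `r`, i.e. the set partition that `r` encodes. -/
noncomputable def classFinset {α : Type*} [Fintype α] (r : Setoid α) : Finset (Finset α) :=
  univ.image fun x ↦ univ.filter (r x)

section classFinset

variable {α : Type*} [Fintype α]

theorem mem_classFinset {r : Setoid α} {B : Finset α} :
    B ∈ classFinset r ↔ ∃ x, ∀ y, y ∈ B ↔ r x y := by
  classical
  simp [classFinset, Finset.ext_iff, iff_comm]

theorem mem_iff_rel_of_mem_classFinset {r : Setoid α} {B : Finset α} {x : α}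
    (hB : B ∈ classFinset r) (hx : x ∈ B) (y : α) : y ∈ B ↔ r x y := by
  obtain ⟨z, hz⟩ := mem_classFinset.1 hB
  have hzx : r z x := (hz x).1 hx
  exact (hz y).trans ⟨r.trans' (r.symm' hzx), r.trans' hzx⟩

theorem exists_mem_classFinset (r : Setoid α) (x : α) : ∃ B ∈ classFinset r, x ∈ B := by
  classical
  exact ⟨univ.filter (r x), mem_classFinset.2 ⟨x, by simp⟩, by simp⟩

theorem classFinset_injective : Function.Injective (classFinset (α := α)) := by
  intro r s hrs
  ext x y
  obtain ⟨B, hB, hx⟩ := exists_mem_classFinset r x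
  rw [← mem_iff_rel_of_mem_classFinset hB hx, ← mem_iff_rel_of_mem_classFinset (hrs ▸ hB) hx]

theorem forall_two_le_card_classFinset_iff {r : Setoid α} :
    (∀ B ∈ classFinset r, 2 ≤ B.card) ↔ r ∈ nonsingletonSetoids α := by
  refine ⟨fun h x ↦ ?_, fun h B hB ↦ ?_⟩
  · obtain ⟨B, hB, hx⟩ := exists_mem_classFinset r x
    obtain ⟨y, hy, hyx⟩ := Finset.exists_mem_ne (h B hB) x
    exact ⟨y, hyx, (mem_iff_rel_of_mem_classFinset hB hx y).1 hy⟩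
  · obtain ⟨x, hx⟩ := mem_classFinset.1 hB
    obtain ⟨y, hyx, hxy⟩ := h x
    exact Finset.one_lt_card.2 ⟨y, (hx y).2 hxy, x, (hx x).2 (r.refl' x), hyx⟩

end classFinset

theorem isSetPartition_classFinset {n : ℕ} (r : Setoid (Fin n)) :
    IsSetPartition (classFinset r) := by
  refine ⟨fun B hB ↦ ?_, fun x ↦ ?_⟩
  · obtain ⟨x, hx⟩ := mem_classFinset.1 hB
    exact ⟨x, (hx x).2 (r.refl' x)⟩
  · obtain ⟨B, hB, hx⟩ := exists_mem_classFinset r x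
    refine ⟨B, ⟨hB, hx⟩, fun B' ⟨hB', hx'⟩ ↦ ?_⟩
    ext y
    rw [mem_iff_rel_of_mem_classFinset hB hx, mem_iff_rel_of_mem_classFinset hB' hx']

theorem exists_classFinset_eq {n : ℕ} {P : Finset (Finset (Fin n))} (hP : IsSetPartition P) :
    ∃ r : Setoid (Fin n), classFinset r = P := by
  obtain ⟨nonempty, existsUnique⟩ := hP
  choose block block_mem block_unique using existsUnique
  have mem_block_iff (x y : Fin n) : y ∈ block x ↔ block x = block y :=
    ⟨fun hy ↦ block_unique y _ ⟨(block_mem x).1, hy⟩, fun h ↦ h ▸ (block_mem y).2⟩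
  refine ⟨Setoid.ker block, ?_⟩
  ext B
  simp only [mem_classFinset, Setoid.ker_def, ← mem_block_iff, ← Finset.ext_iff]
  constructor
  · rintro ⟨x, rfl⟩
    exact (block_mem x).1
  · intro hB
    obtain ⟨x, hx⟩ := nonempty B hB
    exact ⟨x, block_unique x B ⟨hB, hx⟩⟩

theorem beta_eq_ncard_nonsingletonSetoids (n : ℕ) :
    beta n = (nonsingletonSetoids (Fin n)).ncard := by
  refine (Set.BijOn.ncard_eq (f := classFinset) ⟨?_, classFinset_injective.injOn, ?_⟩).symm
  · exact fun r hr ↦ ⟨isSetPartition_classFinset r, forall_two_le_card_classFinset_iff.2 hr⟩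
  · rintro P ⟨hP, hcard⟩
    obtain ⟨r, rfl⟩ := exists_classFinset_eq hP
    exact ⟨r, forall_two_le_card_classFinset_iff.1 hcard, rfl⟩

end SetPartitions

section Counting

theorem finite_setoid (α : Type*) [Finite α] : Finite (Setoid α) :=
  Finite.of_injective (fun r : Setoid α ↦ (r : α → α → Prop)) fun _ _ h ↦
    Setoid.ext fun x y ↦ iff_of_eq (congrFun₂ h x y)

attribute [local instance] finite_setoid

theorem ncard_setoid_card_quotient_le (α : Type*) [Finite α] (m : ℕ) :
    {r : Setoid α | Nat.card (Quotient r) ≤ m}.ncard ≤ m ^ Nat.card α := by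
  have subset_range : {r : Setoid α | Nat.card (Quotient r) ≤ m} ⊆
      Set.range (Setoid.ker : (α → Fin m) → Setoid α) := by
    intro r hr
    refine ⟨fun x ↦ Fin.castLE hr (Finite.equivFin (Quotient r) ⟦x⟧), Setoid.ext fun x y ↦ ?_⟩
    rw [Setoid.ker_def, (Fin.castLE_injective hr).eq_iff, EmbeddingLike.apply_eq_iff_eq,
      Quotient.eq]
  calc _ ≤ (Set.range (Setoid.ker : (α → Fin m) → Setoid α)).ncard :=
        Set.ncard_le_ncard subset_range
    _ ≤ Nat.card (α → Fin m) := Finite.card_range_le _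
    _ = m ^ Nat.card α := by simp [Nat.card_fun]

theorem pow_le_beta (K d : ℕ) : K ^ d ≤ beta (K + K + d) := by
  -- Elements `i` and `K + i` carry the label `i < K` and the other `d` elements carry arbitrary
  -- labels; the label of each of them can be read off from the pair that it joins.
  let label (g : Fin d → Fin K) : Fin (K + K + d) → Fin K := Fin.append (Fin.append id id) g
  have ker_mem (g) : Setoid.ker (label g) ∈ nonsingletonSetoids (Fin (K + K + d)) := by
    intro x
    rcases lt_or_ge (x : ℕ) K with hx | hx
    · refine ⟨Fin.castAdd d (Fin.natAdd K (label g x)), ?_, ?_⟩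
      · simp only [ne_eq, Fin.ext_iff, Fin.val_castAdd, Fin.val_natAdd]
        omega
      · simp only [label, Setoid.ker_def, Fin.append_left, Fin.append_right, id]
    · refine ⟨Fin.castAdd d (Fin.castAdd K (label g x)), ?_, by simp [label]⟩
      simp only [ne_eq, Fin.ext_iff, Fin.val_castAdd]
      omega
  have ker_injective : Function.Injective fun g ↦ Setoid.ker (label g) := by
    intro g g' h
    funext j
    have hrel : Setoid.ker (label g) (Fin.natAdd (K + K) j)
        (Fin.castAdd d (Fin.castAdd K (g j))) := by
      simp [label]
    have hrel' := (Setoid.ext_iff.1 h _ _).1 hrel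
    simpa [label, eq_comm] using hrel'
  calc K ^ d = (Set.univ : Set (Fin d → Fin K)).ncard := by simp [Set.ncard_univ]
    _ ≤ (nonsingletonSetoids (Fin (K + K + d))).ncard :=
        Set.ncard_le_ncard_of_injOn _ (fun g _ ↦ ker_mem g) ker_injective.injOn
    _ = beta (K + K + d) := (beta_eq_ncard_nonsingletonSetoids _).symm

/-- The equivalence relation on `Fin (n + 1)` obtained from `r` by adding the last element to the
class `q`. -/
def insertLast {n : ℕ} (r : Setoid (Fin n)) (q : Quotient r) : Setoid (Fin (n + 1)) :=
  Setoid.ker (Fin.snoc (α := fun _ ↦ Quotient r) (fun x ↦ ⟦x⟧) q)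

section insertLast

variable {n : ℕ} {r s : Setoid (Fin n)}

theorem insertLast_castSucc_castSucc {q : Quotient r} {x y : Fin n} :
    insertLast r q x.castSucc y.castSucc ↔ r x y := by
  rw [insertLast, Setoid.ker_def, Fin.snoc_castSucc, Fin.snoc_castSucc, Quotient.eq]

theorem insertLast_castSucc_last {q : Quotient r} {x : Fin n} :
    insertLast r q x.castSucc (Fin.last n) ↔ ⟦x⟧ = q := by
  rw [insertLast, Setoid.ker_def, Fin.snoc_castSucc, Fin.snoc_last]

theorem insertLast_mem_nonsingletonSetoids (hr : r ∈ nonsingletonSetoids (Fin n))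
    (q : Quotient r) : insertLast r q ∈ nonsingletonSetoids (Fin (n + 1)) := by
  intro z
  induction z using Fin.lastCases with
  | last =>
    obtain ⟨x, rfl⟩ := Quotient.exists_rep q
    exact ⟨x.castSucc, Fin.castSucc_ne_last x, Setoid.symm' _ (insertLast_castSucc_last.2 rfl)⟩
  | cast x =>
    obtain ⟨y, hyx, hxy⟩ := hr x
    exact ⟨y.castSucc, (Fin.castSucc_injective n).ne hyx, insertLast_castSucc_castSucc.2 hxy⟩

theorem eq_of_insertLast_eq {q : Quotient r} {q' : Quotient s}
    (h : insertLast r q = insertLast s q') : r = s := by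
  ext x y
  rw [← insertLast_castSucc_castSucc (q := q), h, insertLast_castSucc_castSucc]

theorem insertLast_injective (r : Setoid (Fin n)) : Function.Injective (insertLast r) := by
  intro q q' h
  obtain ⟨x, rfl⟩ := Quotient.exists_rep q
  rw [← insertLast_castSucc_last, ← h, insertLast_castSucc_last]

end insertLast

theorem ncard_nonsingletonSetoids_mul_le_beta_succ (n m : ℕ) :
    {r ∈ nonsingletonSetoids (Fin n) | m ≤ Nat.card (Quotient r)}.ncard * m ≤ beta (n + 1) := by
  set S := {r ∈ nonsingletonSetoids (Fin n) | m ≤ Nat.card (Quotient r)}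
  let quotientOf (p : S × Fin m) : Quotient p.1.1 :=
    (Finite.equivFin (Quotient p.1.1)).symm (Fin.castLE p.1.2.2 p.2)
  let f (p : S × Fin m) : nonsingletonSetoids (Fin (n + 1)) :=
    ⟨insertLast p.1.1 (quotientOf p), insertLast_mem_nonsingletonSetoids p.1.2.1 _⟩
  have f_injective : Function.Injective f := by
    rintro ⟨⟨r, hr⟩, i⟩ ⟨⟨s, hs⟩, j⟩ h
    have h' := Subtype.ext_iff.1 h
    obtain rfl : r = s := eq_of_insertLast_eq h'
    have hq := insertLast_injective r h'
    obtain rfl : i = j := Fin.castLE_injective _ ((Finite.equivFin _).symm.injective hq)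
    rfl
  calc S.ncard * m = Nat.card (S × Fin m) := by simp [Nat.card_prod]
    _ ≤ Nat.card (nonsingletonSetoids (Fin (n + 1))) := Nat.card_le_card_of_injective f f_injective
    _ = beta (n + 1) := (beta_eq_ncard_nonsingletonSetoids _).symm

theorem succ_mul_beta_le (n m : ℕ) :
    (m + 1) * beta n ≤ beta (n + 1) + (m + 1) * m ^ n := by
  set few := {r : Setoid (Fin n) | Nat.card (Quotient r) ≤ m}
  set many := {r ∈ nonsingletonSetoids (Fin n) | m + 1 ≤ Nat.card (Quotient r)}
  have subset_union : nonsingletonSetoids (Fin n) ⊆ many ∪ few := fun r hr ↦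
    (Nat.lt_or_ge m (Nat.card (Quotient r))).imp (⟨hr, ·⟩) id
  have few_le : few.ncard ≤ m ^ n := by simpa using ncard_setoid_card_quotient_le (Fin n) m
  have many_le : many.ncard * (m + 1) ≤ beta (n + 1) :=
    ncard_nonsingletonSetoids_mul_le_beta_succ n (m + 1)
  calc (m + 1) * beta n ≤ (m + 1) * (many.ncard + few.ncard) := by
        rw [beta_eq_ncard_nonsingletonSetoids]
        gcongr
        exact (Set.ncard_le_ncard subset_union).trans (Set.ncard_union_le _ _)
    _ = many.ncard * (m + 1) + (m + 1) * few.ncard := by ring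
    _ ≤ beta (n + 1) + (m + 1) * m ^ n := by gcongr

end Counting

section BetaGrowth

theorem exp_two_lt_eight : Real.exp 2 < 8 := by
  calc Real.exp 2 = Real.exp 1 ^ 2 := by rw [← Real.exp_nat_mul]; norm_num
    _ < 2.7182818286 ^ 2 := by gcongr; exact Real.exp_one_lt_d9
    _ < 8 := by norm_num

theorem two_le_log_of_eight_le {x : ℝ} (hx : 8 ≤ x) : 2 ≤ Real.log x :=
  (Real.le_log_iff_exp_le (by linarith)).2 (exp_two_lt_eight.le.trans hx)

theorem pow_le_pow_mul_beta {K n : ℕ} (h : 2 * K ≤ n) : K ^ n ≤ K ^ (2 * K) * beta n := by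
  obtain ⟨d, rfl⟩ := Nat.exists_eq_add_of_le h
  rw [pow_add, two_mul]
  gcongr
  exact pow_le_beta K d

theorem pow_two_mul_le_exp_two_pow {K n : ℕ} (hKn : K ≤ n) (hlog : K * Real.log n ≤ n) :
    (K : ℝ) ^ (2 * K) ≤ Real.exp 2 ^ n := by
  rcases K.eq_zero_or_pos with rfl | hK
  · simpa using one_le_pow₀ (Real.one_le_exp zero_le_two)
  have log_le : Real.log K ≤ Real.log n := Real.log_le_log (by positivity) (by gcongr)
  calc (K : ℝ) ^ (2 * K) = Real.exp (2 * (K * Real.log K)) := by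
        rw [← Real.exp_log (show (0 : ℝ) < K ^ (2 * K) by positivity), Real.log_pow]
        push_cast
        rw [mul_assoc]
    _ ≤ Real.exp (n * 2) := by
        rw [mul_comm (n : ℝ)]
        gcongr
        exact (by gcongr : K * Real.log K ≤ K * Real.log n).trans hlog
    _ = Real.exp 2 ^ n := Real.exp_nat_mul 2 n

theorem two_mul_pow_le_beta {m n : ℕ} (hn : 8 ≤ n) (hm : 16 * m * Real.log n ≤ n) :
    2 * m ^ n ≤ beta n := by
  have two_le_log : 2 ≤ Real.log n := two_le_log_of_eight_le (by exact_mod_cast hn)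
  have two_mul_le : 2 * (16 * m) ≤ n := by
    have : (2 * (16 * m) : ℝ) ≤ n := by nlinarith [Nat.cast_nonneg (α := ℝ) m]
    exact_mod_cast this
  have pow_le : (16 * m : ℝ) ^ (2 * (16 * m)) ≤ Real.exp 2 ^ n := by
    exact_mod_cast pow_two_mul_le_exp_two_pow (K := 16 * m) (by omega) (by exact_mod_cast hm)
  have key : (8 : ℝ) ^ n * (2 ^ n * m ^ n) ≤ 8 ^ n * beta n :=
    calc (8 : ℝ) ^ n * (2 ^ n * m ^ n) = (16 * m) ^ n := by
          rw [← mul_assoc, ← mul_pow, ← mul_pow]; norm_num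
      _ ≤ (16 * m) ^ (2 * (16 * m)) * beta n := by exact_mod_cast pow_le_pow_mul_beta two_mul_le
      _ ≤ Real.exp 2 ^ n * beta n := by gcongr
      _ ≤ 8 ^ n * beta n := by gcongr; exact exp_two_lt_eight.le
  have two_pow_mul_le : 2 ^ n * m ^ n ≤ beta n := by
    exact_mod_cast le_of_mul_le_mul_left key (by positivity)
  exact (Nat.mul_le_mul_right _ (Nat.le_self_pow (by omega) 2)).trans two_pow_mul_le

theorem mul_beta_le_log_mul_beta_succ {n : ℕ} (hn : 8 ≤ n) :
    n * beta n ≤ 32 * Real.log n * beta (n + 1) := by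
  have two_le_log : 2 ≤ Real.log n := two_le_log_of_eight_le (by exact_mod_cast hn)
  set m := ⌊(n : ℝ) / (16 * Real.log n)⌋₊
  have hm : 16 * m * Real.log n ≤ n := by
    have := (le_div_iff₀ (by positivity)).1 (Nat.floor_le (a := (n : ℝ) / (16 * Real.log n))
      (by positivity))
    linarith
  have lt_succ : (n : ℝ) < (m + 1) * (16 * Real.log n) :=
    (div_lt_iff₀ (by positivity)).1 (Nat.lt_floor_add_one _)
  have succ_mul_le : (m + 1) * beta n ≤ 2 * beta (n + 1) := by
    have few_blocks_le : (m + 1) * (2 * m ^ n) ≤ (m + 1) * beta n :=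
      Nat.mul_le_mul_left _ (two_mul_pow_le_beta hn hm)
    linarith [succ_mul_beta_le n m]
  calc (n : ℝ) * beta n ≤ (m + 1) * (16 * Real.log n) * beta n := by gcongr
    _ = 16 * Real.log n * ((m + 1) * beta n) := by ring
    _ ≤ 16 * Real.log n * (2 * beta (n + 1)) := by
        gcongr 16 * Real.log n * ?_
        exact_mod_cast succ_mul_le
    _ = 32 * Real.log n * beta (n + 1) := by ring

theorem beta_le_beta_succ {n : ℕ} (hn : n ≠ 0) : beta n ≤ beta (n + 1) := by
  simpa [hn] using succ_mul_beta_le n 0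

theorem beta_le_log_div_mul_beta_succ {n : ℕ} (hn : 1 ≤ n) :
    (beta n : ℝ) ≤ 64 * (Real.log (n + 1 : ℕ) / (n + 1 : ℕ)) * beta (n + 1) := by
  rw [mul_div_assoc', div_mul_eq_mul_div, le_div_iff₀ (by positivity), mul_comm]
  push_cast
  have hn' : (1 : ℝ) ≤ n := by exact_mod_cast hn
  rcases le_or_gt 8 n with h | h
  · have log_le : Real.log n ≤ Real.log (n + 1) := Real.log_le_log (by positivity) (by linarith)
    calc (n + 1 : ℝ) * beta n ≤ 2 * (n * beta n) := by nlinarith [Nat.cast_nonneg (α := ℝ) (beta n)]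
      _ ≤ 2 * (32 * Real.log n * beta (n + 1)) := by
          gcongr 2 * ?_; exact mul_beta_le_log_mul_beta_succ h
      _ = 64 * Real.log n * beta (n + 1) := by ring
      _ ≤ 64 * Real.log (n + 1) * beta (n + 1) := by gcongr
  · have succ_le : (n + 1 : ℝ) ≤ 8 := by exact_mod_cast h
    have half_le_log : 1 / 2 ≤ Real.log (n + 1) := by
      have := Real.log_le_log two_pos (by linarith : (2 : ℝ) ≤ n + 1)
      linarith [Real.log_two_gt_d9]
    gcongr ?_ * ?_
    · linarith
    · exact_mod_cast beta_le_beta_succ (by omega)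

end BetaGrowth

section Stirling

theorem stirS_eq_neg_one_pow_mul_stirlingFirst (n k : ℕ) :
    stirS n k = (-1) ^ (n + k) * (Nat.stirlingFirst n k : ℤ) := by
  induction n generalizing k with
  | zero => cases k <;> simp [stirS]
  | succ n ih =>
    cases k with
    | zero => simp [stirS]
    | succ k =>
      simp only [stirS, Nat.stirlingFirst_succ_succ, ih]
      push_cast
      ring

theorem abs_stirS (n k : ℕ) : |stirS n k| = Nat.stirlingFirst n k := by
  simp [stirS_eq_neg_one_pow_mul_stirlingFirst, abs_mul]

theorem stirS_succ_eq_zero {n k : ℕ} (h : ¬(1 ≤ k ∧ k ≤ n + 1)) : stirS (n + 1) k = 0 := by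
  rcases k with _ | k
  · rfl
  · rw [stirS_eq_neg_one_pow_mul_stirlingFirst, Nat.stirlingFirst_eq_zero_of_lt (by omega),
      Nat.cast_zero, mul_zero]

theorem mul_abs_stirS_le_abs_stirS_succ (n k : ℕ) : n * |stirS n k| ≤ |stirS (n + 1) k| := by
  rcases k with _ | k
  · cases n <;> simp [stirS]
  · rw [abs_stirS, abs_stirS, Nat.stirlingFirst_succ_succ]
    exact_mod_cast Nat.le_add_right _ _

end Stirling

section LinearRecurrence

theorem abs_sub_le_of_eq_mul_add {a a' t t' c q A : ℝ} (hA : 0 ≤ A) (hrec : a' = c * a + t')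
    (ha : |a| ≤ A * |t|) (hq : |c * t| ≤ q * |t'|) : |a' - t'| ≤ A * q * |t'| :=
  calc |a' - t'| = |c| * |a| := by rw [hrec, add_sub_cancel_right, abs_mul]
    _ ≤ |c| * (A * |t|) := by gcongr
    _ = A * |c * t| := by rw [abs_mul]; ring
    _ ≤ A * (q * |t'|) := by gcongr
    _ = A * q * |t'| := by ring

theorem abs_le_of_eq_mul_add {a a' t t' c q A : ℝ} (hA : 0 ≤ A) (hrec : a' = c * a + t')
    (ha : |a| ≤ A * |t|) (hq : |c * t| ≤ q * |t'|) : |a'| ≤ (A * q + 1) * |t'| :=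
  calc |a'| = |(a' - t') + t'| := by rw [sub_add_cancel]
    _ ≤ |a' - t'| + |t'| := abs_add_le _ _
    _ ≤ A * q * |t'| + |t'| := by gcongr; exact abs_sub_le_of_eq_mul_add hA hrec ha hq
    _ = (A * q + 1) * |t'| := by ring

variable {κ : Type*} {a t : ℕ → κ → ℝ} {c q : ℕ → ℝ} {A₀ : ℝ} {n₀ : ℕ}

theorem exists_abs_le_mul_abs_of_linear_recurrence
    (hrec : ∀ n ≥ n₀, ∀ k, a (n + 1) k = c n * a n k + t (n + 1) k)
    (hq : ∀ n ≥ n₀, ∀ k, |c n * t n k| ≤ q (n + 1) * |t (n + 1) k|)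
    (hinit : ∀ k, |a n₀ k| ≤ A₀ * |t n₀ k|) {n : ℕ} (hn : n₀ ≤ n) :
    ∃ A, 0 ≤ A ∧ ∀ k, |a n k| ≤ A * |t n k| := by
  induction n, hn using Nat.le_induction with
  | base => exact ⟨|A₀|, abs_nonneg _, fun k ↦ (hinit k).trans (by gcongr; exact le_abs_self _)⟩
  | succ n hn ih =>
    obtain ⟨A, hA, ha⟩ := ih
    refine ⟨|A * q (n + 1) + 1|, abs_nonneg _, fun k ↦ ?_⟩
    refine (abs_le_of_eq_mul_add hA (hrec n hn k) (ha k) (hq n hn k)).trans ?_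
    gcongr
    exact le_abs_self _

theorem exists_eventually_abs_le_mul_abs_of_linear_recurrence
    (hrec : ∀ n ≥ n₀, ∀ k, a (n + 1) k = c n * a n k + t (n + 1) k)
    (hq : ∀ n ≥ n₀, ∀ k, |c n * t n k| ≤ q (n + 1) * |t (n + 1) k|)
    (hinit : ∀ k, |a n₀ k| ≤ A₀ * |t n₀ k|) (hlim : Tendsto q atTop (𝓝 0)) :
    ∃ A, 0 < A ∧ ∀ᶠ n in atTop, ∀ k, |a n k| ≤ A * |t n k| := by
  obtain ⟨N, hN₀, hN⟩ : ∃ N ≥ n₀, ∀ n ≥ N, q n ≤ 1 / 2 := by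
    have := (hlim.eventually_le_const one_half_pos).and (eventually_ge_atTop n₀)
    obtain ⟨N, hN⟩ := eventually_atTop.1 this
    exact ⟨N, (hN N le_rfl).2, fun n hn ↦ (hN n hn).1⟩
  obtain ⟨A, -, hA⟩ := exists_abs_le_mul_abs_of_linear_recurrence hrec hq hinit hN₀
  refine ⟨max A 2, by positivity, eventually_atTop.2 ⟨N, fun n hn ↦ ?_⟩⟩
  induction n, hn using Nat.le_induction with
  | base => exact fun k ↦ (hA k).trans (by gcongr; exact le_max_left _ _)
  | succ n hn ih =>
    intro k
    have hnn := hN₀.trans hn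
    refine (abs_le_of_eq_mul_add (by positivity) (hrec n hnn k) (ih k) (hq n hnn k)).trans ?_
    gcongr
    nlinarith [hN (n + 1) (by omega), le_max_right A 2]

end LinearRecurrence

section Matsunaga

/-- The leading term `β_n s_{n,k}` of the Matsunaga number `M_{n,k}`. -/
noncomputable def leadingTerm (n k : ℕ) : ℝ := beta n * stirS n k

theorem matsunaga_eq_zero {n k : ℕ} (h : ¬(1 ≤ k ∧ k ≤ n)) : matsunaga n k = 0 := by
  match n with
  | 0 => rfl
  | 1 => rfl
  | n + 2 => rw [matsunaga, if_neg h]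

theorem matsunaga_succ {n : ℕ} (hn : 1 ≤ n) (k : ℕ) :
    (matsunaga (n + 1) k : ℝ) = (n + 1 : ℕ) * matsunaga n k + leadingTerm (n + 1) k := by
  obtain ⟨n, rfl⟩ := Nat.exists_eq_add_of_le' hn
  by_cases hk : 1 ≤ k ∧ k ≤ n + 2
  · rw [matsunaga, if_pos hk, leadingTerm]
    push_cast
    ring
  · have hk' : ¬(1 ≤ k ∧ k ≤ n + 1) := by omega
    simp [matsunaga_eq_zero hk, matsunaga_eq_zero hk', leadingTerm, stirS_succ_eq_zero hk]

theorem abs_succ_mul_leadingTerm_le {n : ℕ} (hn : 1 ≤ n) (k : ℕ) :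
    |(n + 1 : ℕ) * leadingTerm n k| ≤
      128 * (Real.log (n + 1 : ℕ) / (n + 1 : ℕ)) * |leadingTerm (n + 1) k| := by
  have hstir : (n + 1 : ℕ) * |(stirS n k : ℝ)| ≤ 2 * |(stirS (n + 1) k : ℝ)| := by
    have : (n : ℝ) * |(stirS n k : ℝ)| ≤ |(stirS (n + 1) k : ℝ)| := by
      exact_mod_cast mul_abs_stirS_le_abs_stirS_succ n k
    have hn' : (1 : ℝ) ≤ n := by exact_mod_cast hn
    push_cast
    nlinarith [abs_nonneg (stirS n k : ℝ)]
  simp only [leadingTerm, abs_mul, Nat.abs_cast]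
  calc (n + 1 : ℕ) * (beta n * |(stirS n k : ℝ)|)
      = beta n * ((n + 1 : ℕ) * |(stirS n k : ℝ)|) := by ring
    _ ≤ 64 * (Real.log (n + 1 : ℕ) / (n + 1 : ℕ)) * beta (n + 1) *
          (2 * |(stirS (n + 1) k : ℝ)|) := by
        gcongr
        exact beta_le_log_div_mul_beta_succ hn
    _ = _ := by ring

theorem tendsto_log_natCast_div_natCast :
    Tendsto (fun n : ℕ ↦ Real.log n / n) atTop (𝓝 0) :=
  Real.isLittleO_log_id_atTop.tendsto_div_nhds_zero.comp tendsto_natCast_atTop_atTop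

theorem exists_eventually_abs_matsunaga_le :
    ∃ A : ℝ, 0 < A ∧ ∀ᶠ n in atTop, ∀ k, |(matsunaga n k : ℝ)| ≤ A * |leadingTerm n k| :=
  exists_eventually_abs_le_mul_abs_of_linear_recurrence (n₀ := 1) (A₀ := 0)
    (a := fun n k ↦ (matsunaga n k : ℝ)) (c := fun n ↦ (n + 1 : ℕ))
    (q := fun n ↦ 128 * (Real.log n / n))
    (fun _ hn k ↦ matsunaga_succ hn k) (fun _ hn k ↦ abs_succ_mul_leadingTerm_le hn k)
    (by simp [matsunaga]) (by simpa using tendsto_log_natCast_div_natCast.const_mul 128)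

end Matsunaga

/-- Uniformly for `1 ≤ k ≤ n`:
`M n k = beta n * s n k * (1 + O(n⁻¹ log n))`, i.e. there are `C > 0` and `N`
such that for all `n ≥ N` and `1 ≤ k ≤ n`,
`|M n k - beta n * s n k| ≤ C * beta n * |s n k| * (log n) / n`. -/
theorem matsunaga_asymptotic_uniform :
    ∃ C : ℝ, 0 < C ∧ ∃ N : ℕ, ∀ n : ℕ, N ≤ n → ∀ k : ℕ, 1 ≤ k → k ≤ n →
      |(matsunaga n k : ℝ) - (beta n : ℝ) * (stirS n k : ℝ)| ≤
        C * (beta n : ℝ) * |(stirS n k : ℝ)| * Real.log n / n := by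
  obtain ⟨A, hA, hbound⟩ := exists_eventually_abs_matsunaga_le
  obtain ⟨N, hN⟩ := eventually_atTop.1 (hbound.and (eventually_ge_atTop 1))
  refine ⟨A * 128, by positivity, N + 1, fun n hn k _ _ ↦ ?_⟩
  obtain ⟨n, rfl⟩ := Nat.exists_eq_add_of_le' (le_of_add_le_right hn)
  obtain ⟨habs, hn₁⟩ := hN n (Nat.le_of_succ_le_succ hn)
  calc |(matsunaga (n + 1) k : ℝ) - leadingTerm (n + 1) k|
      ≤ A * (128 * (Real.log (n + 1 : ℕ) / (n + 1 : ℕ))) * |leadingTerm (n + 1) k| :=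
        abs_sub_le_of_eq_mul_add hA.le (matsunaga_succ hn₁ k) (habs k)
          (abs_succ_mul_leadingTerm_le hn₁ k)
    _ = _ := by
        rw [leadingTerm, abs_mul, Nat.abs_cast]
        ring
end

section
/- There exist a constant C > 0 and an integer N such that for all n ≥ N, if w > 0 is the unique positive real with w·e^w = n, then | β_n · √(w+1) · e^{−(w + 1/w − 1)·n + w + 1} − 1 | ≤ C·(log n)/n; in particular β_n is asymptotic to e^{(w + 1/w − 1)n − w − 1} / √(w+1) as n → ∞. -/
open Finset

/-!
The exponential formula identifies `exp (exp z - 1 - z)` as the exponential generating function of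
`beta`, so Cauchy's formula writes `beta n / n!` as an integral over the circle `|z| = w`. The
choice `w * exp w = n` makes `z = w` the saddle point of `exp (exp z) / z ^ n`, the integrand for
the Bell numbers; the extra factor `exp (-z)` is left out of the saddle point equation. On the
circle `exp z = exp w * φ t`, where `φ` is the characteristic function of the Poisson law with rate
`w`, whose Taylor coefficients are the Touchard polynomials. The exponent is therefore a quadratic
of size `w ^ 2 * exp w * t ^ 2`, a cubic term and the linear term of `exp (-z)`, plus a remainder.
To first order the cubic and linear terms contribute an odd function, which integrates to zero
against the Gaussian; every other error is `O(exp (-w)) = O(w / n)`, and Stirling's formula accounts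
for `n!` up to `O(1 / n)`.
-/

section SetPartitions

variable {α : Type*} [DecidableEq α] {a : α} {s U : Finset α}

/-- The partition of `insert a s` whose block containing `a` is `insert a (s \ U)`, and whose other
blocks are those of the partition `Q` of `U ⊆ s`. Every partition of `insert a s` arises in this way
from a unique pair `(U, Q)`. -/
def extendSdiff (ha : a ∉ s) (hU : U ⊆ s) (Q : Finpartition U) : Finpartition (insert a s) :=
  Q.extend (b := insert a (s \ U)) (insert_nonempty _ _).ne_empty
    (disjoint_insert_right.2 ⟨fun h => ha (hU h), disjoint_sdiff⟩)
    (by simp only [sup_eq_union, union_insert, union_sdiff_of_subset hU])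

lemma insert_sdiff_notMem_parts (ha : a ∉ s) (hU : U ⊆ s) (Q : Finpartition U) :
    insert a (s \ U) ∉ Q.parts :=
  fun h => ha (hU (Q.subset h (mem_insert_self _ _)))

lemma sdiff_part_extendSdiff (ha : a ∉ s) (hU : U ⊆ s) (Q : Finpartition U) :
    s \ (extendSdiff ha hU Q).part a = U := by
  have part_eq : (extendSdiff ha hU Q).part a = insert a (s \ U) :=
    Finpartition.part_eq_of_mem _ (mem_insert_self _ _) (mem_insert_self _ _)
  rw [part_eq, sdiff_insert_of_notMem ha, Finset.sdiff_sdiff_eq_self hU]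

lemma extendSdiff_injective (ha : a ∉ s) (hU : U ⊆ s) :
    Function.Injective (extendSdiff ha hU) := by
  intro Q R h
  have erase_eq := congrArg (fun P => P.parts.erase (insert a (s \ U))) h
  ext1
  simpa only [extendSdiff, Finpartition.extend_parts,
    erase_insert (insert_sdiff_notMem_parts ha hU _)] using erase_eq

lemma sup_erase_part (P : Finpartition s) (ha : a ∈ s) :
    (P.parts.erase (P.part a)).sup id = s \ P.part a := by
  ext x
  simp only [mem_sup, mem_erase, id_eq, mem_sdiff]
  constructor
  · rintro ⟨B, ⟨hBa, hB⟩, hx⟩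
    exact ⟨P.subset hB hx, fun hxa => hBa (P.eq_of_mem_parts hB (P.part_mem.2 ha) hx hxa)⟩
  · rintro ⟨hxs, hxa⟩
    obtain ⟨B, hB, hx⟩ := P.exists_mem hxs
    exact ⟨B, ⟨fun h => hxa (h ▸ hx), hB⟩, hx⟩

lemma exists_extendSdiff_eq (ha : a ∉ s) (P : Finpartition (insert a s)) :
    ∃ U, ∃ hU : U ⊆ s, ∃ Q : Finpartition U, extendSdiff ha hU Q = P := by
  have mem_part : a ∈ P.part a := P.mem_part_self.2 (mem_insert_self a s)
  have sup_erase : (P.parts.erase (P.part a)).sup id = s \ P.part a := by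
    rw [sup_erase_part P (mem_insert_self a s), insert_sdiff_of_mem _ mem_part]
  have block_eq : insert a (s \ (s \ P.part a)) = P.part a := by
    rw [sdiff_sdiff_right_self, inf_eq_inter, ← insert_inter_of_mem mem_part,
      inter_eq_right.2 (P.part_subset a)]
  refine ⟨s \ P.part a, sdiff_subset, P.ofSubset (erase_subset _ _) sup_erase, ?_⟩
  ext1
  simp only [extendSdiff, Finpartition.extend_parts, Finpartition.ofSubset_parts, block_eq,
    insert_erase (P.part_mem.2 (mem_insert_self a s))]

theorem sum_finpartition_insert_prod {R : Type*} [CommSemiring R] (ha : a ∉ s)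
    (c : Finset α → R) :
    ∑ P : Finpartition (insert a s), ∏ B ∈ P.parts, c B =
      ∑ U ∈ s.powerset, c (insert a (s \ U)) * ∑ Q : Finpartition U, ∏ B ∈ Q.parts, c B := by
  simp_rw [mul_sum, sum_sigma']
  symm
  refine sum_bij (fun p hp => extendSdiff ha (mem_powerset.1 (mem_sigma.1 hp).1) p.2)
    (fun _ _ => mem_univ _) ?_ ?_ ?_
  · rintro ⟨U, Q⟩ hUQ ⟨V, R⟩ hVR h
    have hU : U ⊆ s := mem_powerset.1 (mem_sigma.1 hUQ).1
    have hV : V ⊆ s := mem_powerset.1 (mem_sigma.1 hVR).1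
    obtain rfl : U = V := by
      rw [← sdiff_part_extendSdiff ha hU Q, ← sdiff_part_extendSdiff ha hV R, h]
    exact congrArg (Sigma.mk U) (extendSdiff_injective ha hU h)
  · intro P _
    obtain ⟨U, hU, Q, rfl⟩ := exists_extendSdiff_eq ha P
    exact ⟨⟨U, Q⟩, mem_sigma.2 ⟨mem_powerset.2 hU, mem_univ _⟩, rfl⟩
  · rintro ⟨U, Q⟩ hUQ
    have hU : U ⊆ s := mem_powerset.1 (mem_sigma.1 hUQ).1
    exact (prod_insert (insert_sdiff_notMem_parts ha hU Q)).symm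

end SetPartitions

section ExponentialFormula

open scoped ContDiff

lemma iteratedDeriv_succ_cexp_comp {φ : ℂ → ℂ} (hφ : ContDiff ℂ ∞ φ) (n : ℕ) (z : ℂ) :
    iteratedDeriv (n + 1) (fun z => Complex.exp (φ z)) z =
      ∑ k ∈ range (n + 1), n.choose k •
        (iteratedDeriv (n - k + 1) φ z * iteratedDeriv k (fun z => Complex.exp (φ z)) z) := by
  have hn : (n : WithTop ℕ∞) ≤ ∞ := mod_cast le_top
  have deriv_cexp : deriv (fun z => Complex.exp (φ z)) = fun z => Complex.exp (φ z) * deriv φ z :=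
    funext fun z => (hφ.differentiable (by simp) z).hasDerivAt.cexp.deriv
  have hφ' : ContDiff ℂ ∞ (deriv φ) := (contDiff_infty_iff_deriv.1 hφ).2
  rw [iteratedDeriv_succ', deriv_cexp, iteratedDeriv_fun_mul (hφ.cexp.of_le hn).contDiffAt
    (hφ'.of_le hn).contDiffAt]
  refine sum_congr rfl fun k _ => ?_
  rw [← iteratedDeriv_succ', nsmul_eq_mul]
  ring

theorem iteratedDeriv_cexp_comp_eq_sum_finpartition {α : Type*} [DecidableEq α] {φ : ℂ → ℂ}
    (hφ : ContDiff ℂ ∞ φ) (z : ℂ) (s : Finset α) :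
    iteratedDeriv #s (fun z => Complex.exp (φ z)) z =
      Complex.exp (φ z) * ∑ P : Finpartition s, ∏ B ∈ P.parts, iteratedDeriv #B φ z := by
  induction s using Finset.strongInduction with
  | H s ih =>
  obtain rfl | ⟨a, has⟩ := s.eq_empty_or_nonempty
  · have : Unique (Finpartition (∅ : Finset α)) := inferInstanceAs (Unique (Finpartition ⊥))
    rw [card_empty, iteratedDeriv_zero, Fintype.sum_unique, Finpartition.parts_eq_empty_iff.2 rfl,
      prod_empty, mul_one]
  obtain ⟨t, hat, rfl⟩ : ∃ t, a ∉ t ∧ insert a t = s :=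
    ⟨s.erase a, notMem_erase a s, insert_erase has⟩
  rw [card_insert_of_notMem hat, iteratedDeriv_succ_cexp_comp hφ, sum_finpartition_insert_prod hat,
    mul_sum, ← sum_powerset_apply_card fun k =>
      iteratedDeriv (#t - k + 1) φ z * iteratedDeriv k (fun z => Complex.exp (φ z)) z]
  refine sum_congr rfl fun U hU => ?_
  have hUt : U ⊆ t := mem_powerset.1 hU
  have card_block : #(insert a (t \ U)) = #t - #U + 1 := by
    rw [card_insert_of_notMem fun h => hat (mem_sdiff.1 h).1, card_sdiff_of_subset hUt]
  rw [ih U (hUt.trans_ssubset (ssubset_insert hat)), card_block]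
  ring

end ExponentialFormula

section SingletonFreePartitions

open Complex

lemma beta_eq_card_finpartition (n : ℕ) :
    beta n = #{P : Finpartition (univ : Finset (Fin n)) | ∀ B ∈ P.parts, 2 ≤ #B} := by
  rw [beta, ← Fintype.card_subtype, ← Nat.card_eq_fintype_card]
  exact Nat.card_congr
    { toFun P := ⟨.ofExistsUnique P.1 (fun _ _ => subset_univ _) (fun x _ => P.2.1.2 x)
        fun h => not_nonempty_empty (P.2.1.1 ∅ h), P.2.2⟩
      invFun P := ⟨P.1.parts, ⟨fun _ hB => P.1.nonempty_of_mem_parts hB,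
        fun x => P.1.existsUnique_mem (mem_univ x)⟩, P.2⟩
      left_inv _ := rfl
      right_inv _ := rfl }

lemma iteratedDeriv_cexp_sub_one_sub_id (k : ℕ) :
    iteratedDeriv k (fun z => exp z - 1 - z) 0 = if 2 ≤ k then 1 else 0 := by
  have iteratedDeriv_exp : iteratedDeriv k exp 0 = 1 := by
    rw [iteratedDeriv_eq_iterate, iter_deriv_exp, exp_zero]
  rw [iteratedDeriv_fun_sub (by fun_prop) (by fun_prop),
    iteratedDeriv_fun_sub (by fun_prop) (by fun_prop), iteratedDeriv_exp, iteratedDeriv_const,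
    iteratedDeriv_fun_id]
  match k with
  | 0 => simp
  | 1 => simp
  | k + 2 => simp

theorem iteratedDeriv_cexp_cexp_sub_one_sub_id (n : ℕ) :
    iteratedDeriv n (fun z => exp (exp z - 1 - z)) 0 = beta n := by
  have formula := iteratedDeriv_cexp_comp_eq_sum_finpartition
    (φ := fun z => exp z - 1 - z) (by fun_prop) 0 (univ : Finset (Fin n))
  rw [card_univ, Fintype.card_fin] at formula
  rw [formula, beta_eq_card_finpartition]
  simp only [iteratedDeriv_cexp_sub_one_sub_id, prod_ite_zero, prod_const_one, sum_boole, exp_zero,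
    sub_self, one_mul]

end SingletonFreePartitions

section CauchyFormula

open Complex
open scoped Real

variable {E : Type*} [NormedAddCommGroup E] [NormedSpace ℂ E]

lemma circleIntegral_eq_integral_neg_pi_pi (F : ℂ → E) (c : ℂ) (r : ℝ) :
    ∮ z in C(c, r), F z = ∫ θ in -π..π, deriv (circleMap c r) θ • F (circleMap c r θ) := by
  have periodic : Function.Periodic
      (fun θ => deriv (circleMap c r) θ • F (circleMap c r θ)) (2 * π) := fun θ => by
    simp only [deriv_circleMap, periodic_circleMap _ _ θ]
  have shift := periodic.intervalIntegral_add_eq 0 (-π)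
  rwa [zero_add, show -π + 2 * π = π by ring] at shift

theorem iteratedDeriv_eq_integral_circleMap [CompleteSpace E] {F : ℂ → E} {c : ℂ} {r : ℝ}
    (hr : 0 < r) (hF : DifferentiableOn ℂ F (Metric.closedBall c r)) (n : ℕ) :
    iteratedDeriv n F c = (n.factorial / (2 * π * r ^ n) : ℂ) •
      ∫ θ in -π..π, exp (-(n * θ * I)) • F (circleMap c r θ) := by
  have hr' : (r : ℂ) ≠ 0 := mod_cast hr.ne'
  have hfact : (n.factorial : ℂ) ≠ 0 := mod_cast n.factorial_ne_zero
  have kernel (θ : ℝ) : deriv (circleMap c r) θ * (1 / (circleMap c r θ - c) ^ (n + 1)) =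
      I / r ^ n * exp (-(n * θ * I)) := by
    have hexp : exp (-(n * θ * I)) = (exp (θ * I) ^ n)⁻¹ := by
      rw [← exp_nat_mul, ← exp_neg]
      ring_nf
    have := exp_ne_zero (θ * I)
    rw [deriv_circleMap, circleMap_sub_center, circleMap_zero, hexp]
    field_simp
    ring
  have cauchy := hF.circleIntegral_one_div_sub_center_pow_smul hr n
  rw [circleIntegral_eq_integral_neg_pi_pi] at cauchy
  simp_rw [← mul_smul, kernel, mul_smul, intervalIntegral.integral_smul] at cauchy
  rw [← inv_smul_smul₀ (div_ne_zero two_pi_I_ne_zero hfact) (iteratedDeriv n F c), ← cauchy,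
    ← mul_smul]
  congr 1
  field_simp

end CauchyFormula

section Taylor

lemma norm_sub_le_of_norm_hasDerivAt_le_pow {E : Type*} [NormedAddCommGroup E] [NormedSpace ℝ E]
    {f f' : ℝ → E} {C : ℝ} {n : ℕ} (hf : ∀ x, HasDerivAt f (f' x) x)
    (bound : ∀ x, ‖f' x‖ ≤ C * |x| ^ n / n.factorial) (x : ℝ) :
    ‖f x - f 0‖ ≤ C * |x| ^ (n + 1) / (n + 1).factorial := by
  have hg (s : ℝ) : HasDerivAt (fun s => f (s * x) - f 0) (x • f' (s * x)) s :=
    ((hf (s * x)).scomp s ((hasDerivAt_id s).mul_const x)).sub_const _ |>.congr_deriv (by simp)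
  have hB (s : ℝ) : HasDerivAt (fun s => C * |x| ^ (n + 1) / (n + 1).factorial * s ^ (n + 1))
      (C * |x| ^ (n + 1) / n.factorial * s ^ n) s := by
    refine ((hasDerivAt_pow (n + 1) s).const_mul _).congr_deriv ?_
    rw [Nat.factorial_succ]
    push_cast
    field_simp
  have key := image_norm_le_of_norm_deriv_right_le_deriv_boundary (a := 0) (b := 1)
    (f := fun s => f (s * x) - f 0) (fun s _ => (hg s).continuousAt.continuousWithinAt)
    (fun s _ => (hg s).hasDerivWithinAt) (by simp) hB (fun s hs => ?_)
    (Set.right_mem_Icc.2 zero_le_one)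
  · simpa using key
  · calc ‖x • f' (s * x)‖ ≤ |x| * (C * |s * x| ^ n / n.factorial) := by
          rw [norm_smul, Real.norm_eq_abs]
          gcongr
          exact bound _
      _ = C * |x| ^ (n + 1) / n.factorial * s ^ n := by
          rw [abs_mul, abs_of_nonneg hs.1]
          ring

theorem norm_sub_taylor_le_of_hasDerivAt {E : Type*} [NormedAddCommGroup E] [NormedSpace ℝ E]
    {f : ℕ → ℝ → E} {C : ℝ} {n : ℕ} (hf : ∀ k x, HasDerivAt (f k) (f (k + 1) x) x)
    (bound : ∀ x, ‖f n x‖ ≤ C) (x : ℝ) :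
    ‖f 0 x - ∑ k ∈ range n, (x ^ k / k.factorial) • f k 0‖ ≤ C * |x| ^ n / n.factorial := by
  induction n generalizing f x with
  | zero => simpa using bound x
  | succ n ih =>
    have sum_hasDerivAt (x : ℝ) :
        HasDerivAt (fun x : ℝ => ∑ k ∈ range (n + 1), (x ^ k / k.factorial) • f k 0)
          (∑ k ∈ range n, (x ^ k / k.factorial) • f (k + 1) 0) x := by
      simp_rw [sum_range_succ', pow_zero]
      refine (HasDerivAt.fun_sum fun k _ => ?_).add_const _
      refine (((hasDerivAt_pow (k + 1) x).div_const _).smul_const _).congr_deriv ?_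
      rw [Nat.factorial_succ]
      push_cast
      congr 1
      field_simp
    have key := norm_sub_le_of_norm_hasDerivAt_le_pow
      (fun x => (hf 0 x).sub (sum_hasDerivAt x)) (ih (fun k => hf (k + 1)) bound) x
    simpa [sum_range_succ'] using key

lemma norm_cexp_ofReal_mul_I_sub_one_add_le (q : ℝ) :
    ‖Complex.exp (q * Complex.I) - (1 + q * Complex.I)‖ ≤ q ^ 2 / 2 := by
  have deriv_step (k : ℕ) (t : ℝ) :
      HasDerivAt (fun t : ℝ => Complex.I ^ k * Complex.exp (t * Complex.I))
        (Complex.I ^ (k + 1) * Complex.exp (t * Complex.I)) t := by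
    refine ((((hasDerivAt_id (t : ℂ)).mul_const Complex.I).cexp.comp_ofReal).const_mul
      (Complex.I ^ k)).congr_deriv ?_
    rw [id, one_mul, pow_succ]
    ring
  have taylor := norm_sub_taylor_le_of_hasDerivAt (n := 2) (C := 1) deriv_step
    (fun t => by simp [Complex.norm_exp_ofReal_mul_I]) q
  simpa [sum_range_succ] using taylor

end Taylor

section Touchard

open Complex Polynomial

/-- The Touchard polynomials `∑ k, S(n, k) X ^ k`, with `S(n, k)` the Stirling numbers of the second
kind. They are the moments of the Poisson distribution, and the recursion is the one produced by
differentiating its characteristic function. -/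
noncomputable def touchard : ℕ → ℕ[X]
  | 0 => 1
  | n + 1 => X * (touchard n + derivative (touchard n))

lemma touchard_zero : touchard 0 = 1 := rfl

lemma touchard_one : touchard 1 = X := by
  simp [touchard]

lemma touchard_two : touchard 2 = X ^ 2 + X := by
  rw [touchard, touchard_one, derivative_X]
  ring

lemma touchard_three : touchard 3 = X ^ 3 + 3 * X ^ 2 + X := by
  rw [touchard, touchard_two, derivative_add, derivative_X_sq, derivative_X, map_ofNat]
  ring

lemma touchard_four : touchard 4 = X ^ 4 + 6 * X ^ 3 + 7 * X ^ 2 + X := by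
  rw [touchard, touchard_three]
  simp only [derivative_add, derivative_X_pow, derivative_X, derivative_mul, derivative_ofNat,
    Nat.cast_ofNat, zero_mul, zero_add, Nat.add_one_sub_one, pow_one, map_ofNat]
  ring

lemma norm_aeval_le_aeval_norm (p : ℕ[X]) (z : ℂ) : ‖aeval z p‖ ≤ aeval ‖z‖ p := by
  rw [aeval_eq_sum_range, aeval_eq_sum_range]
  refine norm_sum_le_of_le _ fun k _ => ?_
  simp only [nsmul_eq_mul, norm_mul, RCLike.norm_natCast, norm_pow, le_refl]

/-- The characteristic function `t ↦ exp (w * (exp (t * I) - 1))` of the Poisson distribution with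
rate `w`. -/
noncomputable def poissonCharFun (w t : ℝ) : ℂ :=
  exp (w * (exp (t * I) - 1))

lemma norm_poissonCharFun (w t : ℝ) :
    ‖poissonCharFun w t‖ = Real.exp (w * (Real.cos t - 1)) := by
  rw [poissonCharFun, norm_exp, re_ofReal_mul, sub_re, exp_ofReal_mul_I_re, one_re]

lemma norm_poissonCharFun_le_one {w : ℝ} (hw : 0 ≤ w) (t : ℝ) : ‖poissonCharFun w t‖ ≤ 1 := by
  rw [norm_poissonCharFun, Real.exp_le_one_iff]
  exact mul_nonpos_of_nonneg_of_nonpos hw (sub_nonpos.2 (Real.cos_le_one t))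

lemma hasDerivAt_aeval_touchard_mul_poissonCharFun (w : ℝ) (k : ℕ) (t : ℝ) :
    HasDerivAt (fun t : ℝ => I ^ k * aeval (w * exp (t * I)) (touchard k) * poissonCharFun w t)
      (I ^ (k + 1) * aeval (w * exp (t * I)) (touchard (k + 1)) * poissonCharFun w t) t := by
  have hexp : HasDerivAt (fun t : ℝ => exp (t * I)) (I * exp (t * I)) t := by
    refine ((hasDerivAt_id (t : ℂ)).mul_const I).cexp.comp_ofReal.congr_deriv ?_
    rw [id, one_mul, mul_comm]
  have hpoly := ((touchard k).hasDerivAt_aeval (w * exp (t * I))).comp t (hexp.const_mul (w : ℂ))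
  refine ((hpoly.const_mul (I ^ k)).mul ((hexp.sub_const 1).const_mul (w : ℂ)).cexp).congr_deriv ?_
  rw [touchard, map_mul, map_add, aeval_X, poissonCharFun, Function.comp_apply]
  ring

theorem norm_poissonCharFun_sub_taylor_le {w : ℝ} (hw : 0 ≤ w) (n : ℕ) (t : ℝ) :
    ‖poissonCharFun w t -
        ∑ k ∈ range n, aeval (w : ℂ) (touchard k) * (t * I) ^ k / k.factorial‖ ≤
      aeval w (touchard n) * |t| ^ n / n.factorial := by
  have bound (t : ℝ) :
      ‖I ^ n * aeval (w * exp (t * I)) (touchard n) * poissonCharFun w t‖ ≤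
        aeval w (touchard n) := by
    have norm_eq : ‖w * exp (t * I)‖ = w := by
      rw [norm_mul, norm_exp_ofReal_mul_I, mul_one, Complex.norm_of_nonneg hw]
    have aeval_le := norm_aeval_le_aeval_norm (touchard n) (w * exp (t * I))
    rw [norm_eq] at aeval_le
    rw [norm_mul, norm_mul, norm_pow, norm_I, one_pow, one_mul]
    exact (mul_le_of_le_one_right (norm_nonneg _) (norm_poissonCharFun_le_one hw t)).trans aeval_le
  have taylor := norm_sub_taylor_le_of_hasDerivAt
    (hasDerivAt_aeval_touchard_mul_poissonCharFun w) bound t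
  have coeff_eq (k : ℕ) : (t ^ k / k.factorial) •
      (I ^ k * aeval (w * exp ((0 : ℝ) * I)) (touchard k) * poissonCharFun w 0) =
        aeval (w : ℂ) (touchard k) * (t * I) ^ k / k.factorial := by
    have charFun_zero : poissonCharFun w 0 = 1 := by simp [poissonCharFun]
    rw [charFun_zero, ofReal_zero, zero_mul, exp_zero, mul_one, mul_one, real_smul]
    push_cast
    ring
  simpa only [coeff_eq, touchard_zero, map_one, pow_zero, one_mul] using taylor

lemma norm_poissonCharFun_sub_cubic_le {w : ℝ} (hw : 0 ≤ w) (t : ℝ) :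
    ‖poissonCharFun w t - (1 + w * t * I - (w ^ 2 + w) * t ^ 2 / 2 -
        (w ^ 3 + 3 * w ^ 2 + w) * t ^ 3 / 6 * I)‖ ≤
      (w ^ 4 + 6 * w ^ 3 + 7 * w ^ 2 + w) * t ^ 4 / 24 := by
  have taylor := norm_poissonCharFun_sub_taylor_le hw 4 t
  simp only [sum_range_succ, sum_range_zero, touchard_zero, touchard_one, touchard_two,
    touchard_three, touchard_four, map_add, map_mul, map_pow, map_one, map_ofNat, aeval_X,
    Nat.factorial, Even.pow_abs (by decide : Even 4)] at taylor
  convert taylor using 1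
  · congr 2
    push_cast
    linear_combination (-(w ^ 2 + w) * t ^ 2 / 2 -
      (w ^ 3 + 3 * w ^ 2 + w) * t ^ 3 / 6 * I : ℂ) * I_sq
  · push_cast
    ring

end Touchard

section Laplace

open MeasureTheory Complex
open scoped Real

lemma norm_cexp_neg_add_mul_I_add_sub_le (a q : ℝ) (R : ℂ) :
    ‖exp (-a + q * I + R) - Real.exp (-a) * (1 + q * I)‖ ≤
      (‖R‖ + q ^ 2 / 2) * Real.exp (‖R‖ - a) := by
  have exp_sub_one : ‖exp R - 1‖ ≤ ‖R‖ * Real.exp ‖R‖ := by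
    simpa using norm_exp_sub_sum_le_norm_mul_exp R 1
  have split : exp (-a + q * I + R) - Real.exp (-a) * (1 + q * I) =
      Real.exp (-a) * (exp (q * I) * (exp R - 1) + (exp (q * I) - (1 + q * I))) := by
    rw [exp_add, exp_add, ofReal_exp, ofReal_neg]
    ring
  calc ‖exp (-a + q * I + R) - Real.exp (-a) * (1 + q * I)‖
      ≤ Real.exp (-a) * (‖R‖ * Real.exp ‖R‖ + q ^ 2 / 2 * Real.exp ‖R‖) := by
        rw [split, norm_mul, norm_real, Real.norm_of_nonneg (Real.exp_pos _).le]
        gcongr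
        refine norm_add_le_of_le ?_ ((norm_cexp_ofReal_mul_I_sub_one_add_le q).trans ?_)
        · rwa [norm_mul, norm_exp_ofReal_mul_I, one_mul]
        · exact le_mul_of_one_le_right (by positivity) (Real.one_le_exp (norm_nonneg R))
    _ = (‖R‖ + q ^ 2 / 2) * Real.exp (‖R‖ - a) := by
        rw [sub_eq_add_neg, Real.exp_add]
        ring

lemma intervalIntegral_eq_zero_of_odd {E : Type*} [NormedAddCommGroup E] [NormedSpace ℝ E]
    {f : ℝ → E} (hf : Function.Odd f) (δ : ℝ) : ∫ t in -δ..δ, f t = 0 := by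
  have reflect := intervalIntegral.integral_comp_neg (a := -δ) (b := δ) f
  simp only [hf _, intervalIntegral.integral_neg, neg_neg] at reflect
  have := IsAddTorsionFree.of_isTorsionFree ℝ E
  exact neg_eq_self.1 reflect

lemma norm_integral_sub_integral_le_of_norm_le {E : Type*} [NormedAddCommGroup E] [NormedSpace ℝ E]
    {f : ℝ → E} (hf : Continuous f) {δ L T : ℝ} (hδ : 0 ≤ δ) (hδL : δ ≤ L)
    (tail : ∀ t, δ ≤ |t| → |t| ≤ L → ‖f t‖ ≤ T) :
    ‖(∫ t in -L..L, f t) - ∫ t in -δ..δ, f t‖ ≤ 2 * (L - δ) * T := by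
  have left : ‖∫ t in -L..-δ, f t‖ ≤ T * |-δ - -L| := by
    refine intervalIntegral.norm_integral_le_of_norm_le_const fun t ht => ?_
    rw [Set.uIoc_of_le (neg_le_neg hδL)] at ht
    have abs_t : |t| = -t := abs_of_nonpos (ht.2.trans (neg_nonpos.2 hδ))
    exact tail t (by linarith [ht.2]) (by linarith [ht.1])
  have right : ‖∫ t in δ..L, f t‖ ≤ T * |L - δ| := by
    refine intervalIntegral.norm_integral_le_of_norm_le_const fun t ht => ?_
    rw [Set.uIoc_of_le hδL] at ht
    have abs_t : |t| = t := abs_of_nonneg (hδ.trans ht.1.le)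
    exact tail t (by linarith [ht.1]) (by linarith [ht.2])
  have hint (a b : ℝ) : IntervalIntegrable f volume a b := hf.intervalIntegrable a b
  rw [← intervalIntegral.integral_add_adjacent_intervals (hint (-L) (-δ)) (hint (-δ) L),
    ← intervalIntegral.integral_add_adjacent_intervals (hint (-δ) δ) (hint δ L),
    add_comm (∫ t in -δ..δ, f t), ← add_assoc, add_sub_cancel_right]
  rw [neg_sub_neg, abs_of_nonneg (sub_nonneg.2 hδL)] at left
  rw [abs_of_nonneg (sub_nonneg.2 hδL)] at right
  linarith [norm_add_le (∫ t in -L..-δ, f t) (∫ t in δ..L, f t)]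

lemma abs_integral_gaussian_sub_le {b c δ : ℝ} (hb : 0 < b) (hc : 0 ≤ c) (hδ : 0 ≤ δ) :
    |(∫ t in -δ..δ, Real.exp (-(b + c) * t ^ 2)) - √(π / (b + c))| ≤
      Real.exp (-c * δ ^ 2) * √(π / b) := by
  have hbc : Integrable fun t : ℝ => Real.exp (-(b + c) * t ^ 2) :=
    integrable_exp_neg_mul_sq (add_pos_of_pos_of_nonneg hb hc)
  have hb' : Integrable fun t : ℝ => Real.exp (-c * δ ^ 2) * Real.exp (-b * t ^ 2) :=
    (integrable_exp_neg_mul_sq hb).const_mul _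
  have pointwise : ∀ t ∈ (Set.Ioc (-δ) δ)ᶜ,
      Real.exp (-(b + c) * t ^ 2) ≤ Real.exp (-c * δ ^ 2) * Real.exp (-b * t ^ 2) := by
    intro t ht
    have hδt : δ ^ 2 ≤ t ^ 2 := by
      rw [Set.mem_compl_iff, Set.mem_Ioc, not_and_or, not_lt, not_le] at ht
      rcases ht with ht | ht <;> nlinarith
    rw [← Real.exp_add, Real.exp_le_exp]
    nlinarith [mul_le_mul_of_nonneg_left hδt hc]
  rw [← integral_gaussian (b + c), ← integral_gaussian b, ← integral_const_mul,
    intervalIntegral.integral_of_le (neg_le_self hδ),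
    ← integral_add_compl (s := Set.Ioc (-δ) δ) measurableSet_Ioc hbc, sub_add_cancel_left, abs_neg,
    abs_of_nonneg (integral_nonneg fun t => (Real.exp_pos _).le)]
  exact (setIntegral_mono_on hbc.integrableOn hb'.integrableOn measurableSet_Ioc.compl
    pointwise).trans (setIntegral_le_integral hb' (.of_forall fun t => by positivity))

lemma integral_gaussian_mul_one_add_odd_mul_I {q : ℝ → ℝ} (hq : Continuous q)
    (hodd : Function.Odd q) (b δ : ℝ) :
    ∫ t in -δ..δ, (Real.exp (-b * t ^ 2) * (1 + q t * I) : ℂ) =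
      (∫ t in -δ..δ, Real.exp (-b * t ^ 2) : ℝ) := by
  have odd_part : ∫ t in -δ..δ, (Real.exp (-b * t ^ 2) * q t * I : ℂ) = 0 :=
    intervalIntegral_eq_zero_of_odd (fun t => by rw [hodd, neg_sq]; push_cast; ring) δ
  simp_rw [mul_add, mul_one, ← mul_assoc]
  rw [intervalIntegral.integral_add (Continuous.intervalIntegrable (by fun_prop) _ _)
    (Continuous.intervalIntegrable (by fun_prop) _ _), odd_part, add_zero,
    intervalIntegral.integral_ofReal]

theorem norm_integral_sub_sqrt_le_of_norm_sub_gaussian_le {f : ℝ → ℂ} {q : ℝ → ℝ}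
    {b c δ L ε T : ℝ} (hf : Continuous f) (hq : Continuous q) (hodd : Function.Odd q)
    (hb : 0 < b) (hc : 0 ≤ c) (hδ : 0 ≤ δ) (hδL : δ ≤ L)
    (center : ∀ t, |t| ≤ δ → ‖f t - Real.exp (-(b + c) * t ^ 2) * (1 + q t * I)‖ ≤
      ε * Real.exp (-b * t ^ 2))
    (tail : ∀ t, δ ≤ |t| → |t| ≤ L → ‖f t‖ ≤ T) :
    ‖(∫ t in -L..L, f t) - √(π / (b + c))‖ ≤
      (ε + Real.exp (-c * δ ^ 2)) * √(π / b) + 2 * (L - δ) * T := by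
  have hε : 0 ≤ ε := by simpa using (norm_nonneg _).trans (center 0 (by rwa [abs_zero]))
  have hgauss : Integrable fun t : ℝ => ε * Real.exp (-b * t ^ 2) :=
    (integrable_exp_neg_mul_sq hb).const_mul ε
  have model_cont : Continuous fun t => (Real.exp (-(b + c) * t ^ 2) * (1 + q t * I) : ℂ) := by
    fun_prop
  have center_error : ‖(∫ t in -δ..δ, f t) -
      ∫ t in -δ..δ, (Real.exp (-(b + c) * t ^ 2) * (1 + q t * I) : ℂ)‖ ≤ ε * √(π / b) := by
    rw [← intervalIntegral.integral_sub (hf.intervalIntegrable _ _)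
      (model_cont.intervalIntegrable _ _), ← integral_gaussian, ← integral_const_mul]
    refine (intervalIntegral.norm_integral_le_of_norm_le (neg_le_self hδ) (.of_forall fun t ht =>
      center t (abs_le.2 ⟨ht.1.le, ht.2⟩)) hgauss.intervalIntegrable).trans ?_
    rw [intervalIntegral.integral_of_le (neg_le_self hδ)]
    exact setIntegral_le_integral hgauss (.of_forall fun t => by positivity)
  rw [integral_gaussian_mul_one_add_odd_mul_I hq hodd] at center_error
  have gauss_error := abs_integral_gaussian_sub_le hb hc hδ
  rw [← Real.norm_eq_abs, ← norm_real, ofReal_sub] at gauss_error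
  have tail_error := norm_integral_sub_integral_le_of_norm_le hf hδ hδL tail
  linarith [norm_sub_le_norm_sub_add_norm_sub (∫ t in -L..L, f t) (∫ t in -δ..δ, f t)
      (√(π / (b + c)) : ℂ),
    norm_sub_le_norm_sub_add_norm_sub (∫ t in -δ..δ, f t)
      (∫ t in -δ..δ, Real.exp (-(b + c) * t ^ 2) : ℝ) (√(π / (b + c)) : ℂ)]

end Laplace

section SaddlePoint

open Complex Filter Asymptotics
open scoped Real

/-- The integrand of Cauchy's formula for `exp (exp z - 1 - z)` on the circle `z = w * exp (t * I)`,
normalised to be `1` at `t = 0`, for the index `n = w * exp w` which makes `t = 0` the saddle point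
of `exp (exp z) / z ^ n`. -/
noncomputable def saddleIntegrand (w t : ℝ) : ℂ :=
  exp (Real.exp w * (poissonCharFun w t - 1) - w * (exp (t * I) - 1) - w * Real.exp w * t * I)

/-- Minus the coefficient of `t ^ 2 / 2` in the exponent of the Bell part
`exp (Real.exp w * (poissonCharFun w t - 1) - w * Real.exp w * t * I)` of `saddleIntegrand w t`. -/
noncomputable def saddleCurvature (w : ℝ) : ℝ :=
  w * (w + 1) * Real.exp w

/-- The odd part, up to third order in `t`, of the phase of `saddleIntegrand w t`: the cubic term
comes from the Bell part and the linear term from the factor `exp (-z)`. -/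
noncomputable def saddlePhase (w t : ℝ) : ℝ :=
  -(Real.exp w * (w ^ 3 + 3 * w ^ 2 + w) / 6 * t ^ 3 + w * t)

/-- Bounds what the exponent of `saddleIntegrand w t` contains besides `saddleCurvature` and
`saddlePhase`: the fourth order remainder of the Bell part and the second order remainder of the
factor `exp (-z)`. -/
noncomputable def saddleRemainderBound (w t : ℝ) : ℝ :=
  Real.exp w * ((w ^ 4 + 6 * w ^ 3 + 7 * w ^ 2 + w) * t ^ 4 / 24) +
    w * (t ^ 2 / 2)

lemma continuous_saddleIntegrand (w : ℝ) : Continuous (saddleIntegrand w) := by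
  unfold saddleIntegrand poissonCharFun
  fun_prop

lemma continuous_saddlePhase (w : ℝ) : Continuous (saddlePhase w) := by
  unfold saddlePhase
  fun_prop

lemma odd_saddlePhase (w : ℝ) : Function.Odd (saddlePhase w) := fun t => by
  simp only [saddlePhase]
  ring

lemma exists_saddleIntegrand_eq_exp {w : ℝ} (hw : 0 ≤ w) (t : ℝ) :
    ∃ R : ℂ, ‖R‖ ≤ saddleRemainderBound w t ∧
      saddleIntegrand w t =
        exp (-(saddleCurvature w * t ^ 2 / 2 : ℝ) + saddlePhase w t * I + R) := by
  have bell_bound := norm_poissonCharFun_sub_cubic_le hw t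
  have linear_bound := norm_cexp_ofReal_mul_I_sub_one_add_le t
  set bellRemainder := poissonCharFun w t - (1 + w * t * I - (w ^ 2 + w) * t ^ 2 / 2 -
    (w ^ 3 + 3 * w ^ 2 + w) * t ^ 3 / 6 * I) with bell_eq
  set linearRemainder := exp (t * I) - (1 + t * I) with linear_eq
  refine ⟨Real.exp w * bellRemainder - w * linearRemainder, norm_sub_le_of_le ?_ ?_, ?_⟩
  · rw [norm_mul, Complex.norm_of_nonneg (Real.exp_pos w).le]
    gcongr
  · rw [norm_mul, Complex.norm_of_nonneg hw]
    gcongr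
  · rw [saddleIntegrand, bell_eq, linear_eq, saddleCurvature, saddlePhase]
    congr 1
    push_cast
    ring

section CentralEstimates

variable {w t : ℝ}

lemma exp_mul_sq_le_saddleCurvature_mul_sq (hw : 0 ≤ w) (t : ℝ) :
    Real.exp w * (w * t) ^ 2 ≤ saddleCurvature w * t ^ 2 := by
  have : 0 ≤ w * Real.exp w * t ^ 2 := by positivity
  rw [saddleCurvature]
  linarith

lemma saddleRemainderBound_le_div_four (hw : 1 ≤ w) (ht : |w * t| ≤ 1 / 4) :
    saddleRemainderBound w t ≤ Real.exp w * (w * t) ^ 2 / 4 := by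
  have quartic : w ^ 4 + 6 * w ^ 3 + 7 * w ^ 2 + w ≤ 15 * w ^ 4 := by
    have := pow_le_pow_right₀ hw (show 3 ≤ 4 by decide)
    have := pow_le_pow_right₀ hw (show 2 ≤ 4 by decide)
    have := le_self_pow₀ hw (show 4 ≠ 0 by decide)
    linarith
  have exp_ge : 5 / 2 ≤ Real.exp w := by
    nlinarith [Real.quadratic_le_exp_of_nonneg (zero_le_one.trans hw)]
  have wt_sq : (w * t) ^ 2 ≤ 1 / 16 := by
    rw [← sq_abs]
    nlinarith [abs_nonneg (w * t)]
  have bell_le : Real.exp w * ((w ^ 4 + 6 * w ^ 3 + 7 * w ^ 2 + w) * t ^ 4 / 24) ≤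
      Real.exp w * (w * t) ^ 2 / 25 := by
    calc _ ≤ Real.exp w * (15 * w ^ 4 * t ^ 4 / 24) := by gcongr
      _ = Real.exp w * (w * t) ^ 2 * (15 / 24 * (w * t) ^ 2) := by ring
      _ ≤ Real.exp w * (w * t) ^ 2 * (1 / 25) := by gcongr; linarith
      _ = _ := by ring
  have linear_le : w * (t ^ 2 / 2) ≤ Real.exp w * (w * t) ^ 2 / 5 := by
    calc w * (t ^ 2 / 2) ≤ w ^ 2 * (t ^ 2 / 2) := by
          gcongr
          exact le_self_pow₀ hw two_ne_zero
      _ = 5 / 2 * (w * t) ^ 2 / 5 := by ring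
      _ ≤ _ := by gcongr
  have : 0 ≤ Real.exp w * (w * t) ^ 2 := by positivity
  rw [saddleRemainderBound]
  linarith

lemma saddleRemainderBound_add_saddlePhase_sq_le (hw : 1 ≤ w) (t : ℝ) :
    saddleRemainderBound w t + saddlePhase w t ^ 2 / 2 ≤
      Real.exp (-w) * ((Real.exp w * (w * t) ^ 2) ^ 3 + (Real.exp w * (w * t) ^ 2) ^ 2 +
        2 * (Real.exp w * (w * t) ^ 2)) := by
  have w_le_sq : w ≤ w ^ 2 := le_self_pow₀ hw two_ne_zero
  have sq_le_cube : w ^ 2 ≤ w ^ 3 := pow_le_pow_right₀ hw (by decide)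
  have cube_le_quartic : w ^ 3 ≤ w ^ 4 := pow_le_pow_right₀ hw (by decide)
  have bell_le : Real.exp w * ((w ^ 4 + 6 * w ^ 3 + 7 * w ^ 2 + w) * t ^ 4 / 24) ≤
      Real.exp w * ((24 * w ^ 4) * t ^ 4 / 24) := by
    gcongr
    linarith
  have linear_le : w * (t ^ 2 / 2) ≤ w ^ 2 * (t ^ 2 / 2) := by gcongr
  have phase_le : saddlePhase w t ^ 2 / 2 ≤
      (Real.exp w * (w ^ 3 + 3 * w ^ 2 + w) / 6 * t ^ 3) ^ 2 + (w * t) ^ 2 := by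
    rw [saddlePhase]
    linarith [add_sq_le (a := Real.exp w * (w ^ 3 + 3 * w ^ 2 + w) / 6 * t ^ 3) (b := w * t)]
  have cubic_le : (Real.exp w * (w ^ 3 + 3 * w ^ 2 + w) / 6 * t ^ 3) ^ 2 ≤
      (Real.exp w * (6 * w ^ 3) / 6 * t ^ 3) ^ 2 := by
    rw [mul_pow, mul_pow _ (t ^ 3)]
    gcongr
    linarith
  have exp_cancel : Real.exp (-w) * Real.exp w = 1 := by rw [← Real.exp_add]; simp
  have expand : Real.exp (-w) * ((Real.exp w * (w * t) ^ 2) ^ 3 + (Real.exp w * (w * t) ^ 2) ^ 2 +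
      2 * (Real.exp w * (w * t) ^ 2)) = (Real.exp w * (6 * w ^ 3) / 6 * t ^ 3) ^ 2 +
        Real.exp w * ((24 * w ^ 4) * t ^ 4 / 24) + 2 * (w * t) ^ 2 := by
    linear_combination (Real.exp w ^ 2 * (w * t) ^ 6 + Real.exp w * (w * t) ^ 4 +
      2 * (w * t) ^ 2) * exp_cancel
  rw [saddleRemainderBound]
  nlinarith [sq_nonneg (w * t)]

lemma cube_add_sq_add_two_mul_le_exp {y : ℝ} (hy : 0 ≤ y) :
    y ^ 3 + y ^ 2 + 2 * y ≤ 4000 * Real.exp (y / 8) := by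
  have pow_le (k : ℕ) : y ^ k ≤ 8 ^ k * k.factorial * Real.exp (y / 8) := by
    have := Real.pow_div_factorial_le_exp (y / 8) (by positivity) k
    rwa [div_pow, div_div, div_le_iff₀' (by positivity)] at this
  have cube := pow_le 3
  have square := pow_le 2
  have linear := pow_le 1
  norm_num [Nat.factorial] at cube square linear
  linarith [Real.exp_pos (y / 8)]

lemma norm_saddleIntegrand_sub_gaussian_le (hw : 1 ≤ w) (ht : |w * t| ≤ 1 / 4) :
    ‖saddleIntegrand w t -
        Real.exp (-(saddleCurvature w / 8 + 3 * saddleCurvature w / 8) * t ^ 2) *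
          (1 + saddlePhase w t * I)‖ ≤
      4000 * Real.exp (-w) * Real.exp (-(saddleCurvature w / 8) * t ^ 2) := by
  obtain ⟨R, norm_R_le, integrand_eq⟩ :=
    exists_saddleIntegrand_eq_exp (zero_le_one.trans hw) t
  set a := saddleCurvature w
  set y := Real.exp w * (w * t) ^ 2
  have y_nonneg : 0 ≤ y := by positivity
  have y_le : y ≤ a * t ^ 2 := exp_mul_sq_le_saddleCurvature_mul_sq (zero_le_one.trans hw) t
  have R_le_exponent : ‖R‖ ≤ y / 4 := norm_R_le.trans (saddleRemainderBound_le_div_four hw ht)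
  have error_le : ‖R‖ + saddlePhase w t ^ 2 / 2 ≤
      Real.exp (-w) * (4000 * Real.exp (y / 8)) :=
    (add_le_add_left norm_R_le _).trans <|
      (saddleRemainderBound_add_saddlePhase_sq_le hw t).trans <| by
        gcongr
        exact cube_add_sq_add_two_mul_le_exp y_nonneg
  have gaussian_eq : -(a / 8 + 3 * a / 8) * t ^ 2 = -(a * t ^ 2 / 2) := by ring
  rw [integrand_eq, gaussian_eq]
  calc _ ≤ (‖R‖ + saddlePhase w t ^ 2 / 2) * Real.exp (‖R‖ - a * t ^ 2 / 2) :=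
        norm_cexp_neg_add_mul_I_add_sub_le _ _ _
    _ ≤ Real.exp (-w) * (4000 * Real.exp (y / 8)) * Real.exp (y / 4 - a * t ^ 2 / 2) := by gcongr
    _ = 4000 * Real.exp (-w) * Real.exp (y / 8 + (y / 4 - a * t ^ 2 / 2)) := by
        rw [Real.exp_add]
        ring
    _ ≤ 4000 * Real.exp (-w) * Real.exp (-(a / 8) * t ^ 2) := by
        gcongr
        linarith

end CentralEstimates

section TailEstimate

variable {w t : ℝ}

lemma norm_saddleIntegrand (w t : ℝ) : ‖saddleIntegrand w t‖ =
    Real.exp (Real.exp w * ((poissonCharFun w t).re - 1) - w * (Real.cos t - 1)) := by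
  have phase_re : (w * Real.exp w * t * I : ℂ).re = 0 := by
    rw [← ofReal_mul, ← ofReal_mul, re_ofReal_mul, I_re, mul_zero]
  rw [saddleIntegrand, norm_exp, sub_re, sub_re, phase_re, re_ofReal_mul, re_ofReal_mul, sub_re,
    sub_re, exp_ofReal_mul_I_re, one_re, sub_zero]

lemma exp_neg_le_one_sub_half {y : ℝ} (hy₀ : 0 ≤ y) (hy₁ : y ≤ 1) :
    Real.exp (-y) ≤ 1 - y / 2 := by
  rw [Real.exp_neg, inv_le_iff_one_le_mul₀ (Real.exp_pos _)]
  nlinarith [Real.add_one_le_exp y]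

lemma mul_cos_sub_one_le (hw : 0 < w) (htπ : |t| ≤ π) (ht : 1 / 4 ≤ w * |t|) :
    w * (Real.cos t - 1) ≤ -(1 / (80 * w)) := by
  have cos_le : Real.cos t - 1 ≤ -(t ^ 2 / 5) := by
    have pi_sq_le : π ^ 2 ≤ 10 := by nlinarith [Real.pi_lt_d2, Real.pi_pos]
    have coeff_le : (1 : ℝ) / 5 ≤ 2 / π ^ 2 := by
      rw [div_le_div_iff₀ (by norm_num) (by positivity)]
      linarith
    nlinarith [Real.cos_le_one_sub_mul_cos_sq htπ, sq_nonneg t]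
  have sq_ge : 1 / 16 ≤ (w * t) ^ 2 := by
    rw [← sq_abs, abs_mul, abs_of_pos hw]
    nlinarith
  calc w * (Real.cos t - 1) ≤ w * -(t ^ 2 / 5) := by gcongr
    _ = -((w * t) ^ 2 / (5 * w)) := by field_simp
    _ ≤ -(1 / 16 / (5 * w)) := by gcongr
    _ = -(1 / (80 * w)) := by
        field_simp
        norm_num

lemma norm_saddleIntegrand_le_of_le_abs (hw : 1 ≤ w) (htπ : |t| ≤ π) (ht : 1 / 4 ≤ w * |t|) :
    ‖saddleIntegrand w t‖ ≤ Real.exp (2 * w - Real.exp w / (160 * w)) := by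
  have hw₀ : 0 < w := zero_lt_one.trans_le hw
  have re_le : (poissonCharFun w t).re ≤ 1 - 1 / (160 * w) := by
    calc _ ≤ Real.exp (w * (Real.cos t - 1)) := (re_le_norm _).trans_eq (norm_poissonCharFun w t)
      _ ≤ Real.exp (-(1 / (80 * w))) := Real.exp_le_exp.2 (mul_cos_sub_one_le hw₀ htπ ht)
      _ ≤ 1 - 1 / (80 * w) / 2 := exp_neg_le_one_sub_half (by positivity) <| by
          rw [div_le_one (by positivity)]
          linarith
      _ = 1 - 1 / (160 * w) := by ring
  have bell_le := mul_le_mul_of_nonneg_left (sub_le_sub_right re_le 1) (Real.exp_pos w).le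
  have linear_ge : w * (-2) ≤ w * (Real.cos t - 1) := by
    gcongr
    linarith [Real.neg_one_le_cos t]
  rw [norm_saddleIntegrand, div_eq_mul_one_div]
  exact Real.exp_le_exp.2 (by linarith)

end TailEstimate

section Asymptotics

variable {w : ℝ}

lemma saddleCurvature_pos (hw : 0 < w) : 0 < saddleCurvature w := by
  unfold saddleCurvature
  positivity

lemma norm_integral_saddleIntegrand_sub_le (hw : 1 ≤ w) :
    ‖(∫ t in -π..π, saddleIntegrand w t) - √(2 * π / saddleCurvature w)‖ ≤
      (4000 * Real.exp (-w) + Real.exp (-(3 * saddleCurvature w / 8) * (1 / (4 * w)) ^ 2)) *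
          (2 * √(2 * π / saddleCurvature w)) +
        2 * π * Real.exp (2 * w - Real.exp w / (160 * w)) := by
  have hw₀ : 0 < w := zero_lt_one.trans_le hw
  have ha := saddleCurvature_pos hw₀
  have mul_cutoff : w * (1 / (4 * w)) = 1 / 4 := by field_simp
  have cutoff_le : 1 / (4 * w) ≤ π := by nlinarith [Real.pi_gt_three]
  have laplace := norm_integral_sub_sqrt_le_of_norm_sub_gaussian_le
    (b := saddleCurvature w / 8) (c := 3 * saddleCurvature w / 8)
    (continuous_saddleIntegrand w) (continuous_saddlePhase w) (odd_saddlePhase w)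
    (by positivity) (by positivity) (by positivity) cutoff_le
    (fun t ht => norm_saddleIntegrand_sub_gaussian_le hw <| by
      rw [abs_mul, abs_of_pos hw₀, ← mul_cutoff]
      gcongr)
    (fun t ht htπ => norm_saddleIntegrand_le_of_le_abs hw htπ <| by
      rw [← mul_cutoff]
      gcongr)
  set a := saddleCurvature w
  have sqrt_total : √(π / (a / 8 + 3 * a / 8)) = √(2 * π / a) := by
    congr 1
    field_simp
    norm_num
  have sqrt_half : √(π / (a / 8)) = 2 * √(2 * π / a) := by
    rw [Real.sqrt_eq_iff_mul_self_eq_of_pos (by positivity), mul_mul_mul_comm,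
      Real.mul_self_sqrt (by positivity)]
    field_simp
    norm_num
  rw [sqrt_total, sqrt_half] at laplace
  refine laplace.trans ?_
  gcongr
  linarith [show 0 < 1 / (4 * w) by positivity]

lemma le_saddleCurvature_mul_cutoff_sq (hw : 1 ≤ w) (hexp : 1000 * w ^ 2 ≤ Real.exp w) :
    w ≤ 3 * saddleCurvature w / 8 * (1 / (4 * w)) ^ 2 := by
  have exponent_eq : 3 * saddleCurvature w / 8 * (1 / (4 * w)) ^ 2 =
      3 * Real.exp w * (w + 1) / (128 * w) := by
    rw [saddleCurvature]
    field_simp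
    norm_num
  rw [exponent_eq, le_div_iff₀ (by positivity)]
  nlinarith

lemma saddleCurvature_mul_tail_le (hw : 1 ≤ w) (hexp : 1000 * w ^ 2 ≤ Real.exp w) :
    saddleCurvature w * Real.exp (2 * w - Real.exp w / (160 * w)) ≤ Real.exp (-w) := by
  have curvature_le : saddleCurvature w ≤ Real.exp w * Real.exp w * Real.exp w := by
    rw [saddleCurvature]
    gcongr <;> linarith [Real.add_one_le_exp w]
  have decay : 6 * w ≤ Real.exp w / (160 * w) := by
    rw [le_div_iff₀ (by positivity)]
    nlinarith
  calc _ ≤ Real.exp w * Real.exp w * Real.exp w * Real.exp (2 * w - 6 * w) := by gcongr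
    _ = Real.exp (-w) := by
      simp only [← Real.exp_add]
      ring_nf

lemma norm_sqrt_mul_integral_saddleIntegrand_sub_one_le (hw : 1 ≤ w)
    (hexp : 1000 * w ^ 2 ≤ Real.exp w) :
    ‖(√(saddleCurvature w / (2 * π)) : ℂ) * (∫ t in -π..π, saddleIntegrand w t) - 1‖ ≤
      8003 * Real.exp (-w) := by
  have ha := saddleCurvature_pos (zero_lt_one.trans_le hw)
  have integral_bound := norm_integral_saddleIntegrand_sub_le hw
  have tail_bound := saddleCurvature_mul_tail_le hw hexp
  have cutoff_bound := le_saddleCurvature_mul_cutoff_sq hw hexp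
  have two_pi_le : 2 * π ≤ saddleCurvature w := by
    rw [saddleCurvature]
    nlinarith [Real.pi_lt_four]
  set a := saddleCurvature w
  set T := Real.exp (2 * w - Real.exp w / (160 * w))
  have sqrt_mul_sqrt : √(a / (2 * π)) * √(2 * π / a) = 1 := by
    rw [← inv_div, Real.sqrt_inv, inv_mul_cancel₀ (by positivity)]
  have sqrt_mul_two_pi_le : √(a / (2 * π)) * (2 * π) ≤ a := by
    rw [← le_div_iff₀ (by positivity), Real.sqrt_le_self_iff]
    exact Or.inr ((one_le_div (by positivity)).2 two_pi_le)
  have factor_eq : (√(a / (2 * π)) : ℂ) * (∫ t in -π..π, saddleIntegrand w t) - 1 =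
      √(a / (2 * π)) * ((∫ t in -π..π, saddleIntegrand w t) - √(2 * π / a)) := by
    rw [mul_sub, ← ofReal_mul √_ √_, sqrt_mul_sqrt, ofReal_one]
  rw [factor_eq, norm_mul, Complex.norm_of_nonneg (Real.sqrt_nonneg _)]
  calc _ ≤ √(a / (2 * π)) * ((4000 * Real.exp (-w) + Real.exp (-(3 * a / 8) * (1 / (4 * w)) ^ 2)) *
          (2 * √(2 * π / a)) + 2 * π * T) := by gcongr
    _ = 2 * (4000 * Real.exp (-w) + Real.exp (-(3 * a / 8) * (1 / (4 * w)) ^ 2)) *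
          (√(a / (2 * π)) * √(2 * π / a)) + √(a / (2 * π)) * (2 * π) * T := by ring
    _ ≤ 2 * (4000 * Real.exp (-w) + Real.exp (-w)) * 1 + a * T := by
        rw [sqrt_mul_sqrt]
        gcongr
        linarith
    _ ≤ 8003 * Real.exp (-w) := by linarith

theorem sqrt_mul_integral_saddleIntegrand_sub_one_isBigO :
    (fun w => (√(saddleCurvature w / (2 * π)) : ℂ) * (∫ t in -π..π, saddleIntegrand w t) - 1)
      =O[atTop] fun w => Real.exp (-w) := by
  have sq_le_exp : ∀ᶠ w in atTop, 1000 * w ^ 2 ≤ Real.exp w := by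
    filter_upwards [(Real.isLittleO_pow_exp_atTop (n := 2)).bound (c := 1 / 1000) (by norm_num)]
      with w hw
    rw [Real.norm_of_nonneg (by positivity), Real.norm_of_nonneg (by positivity)] at hw
    linarith
  refine IsBigO.of_bound 8003 ?_
  filter_upwards [eventually_ge_atTop 1, sq_le_exp] with w hw hexp
  rw [Real.norm_of_nonneg (Real.exp_pos _).le]
  exact norm_sqrt_mul_integral_saddleIntegrand_sub_one_le hw hexp

end Asymptotics

end SaddlePoint

section Stirling

open Filter Topology
open scoped Real

lemma monotone_log_stirlingSeq_sub :
    Monotone fun n : ℕ => Real.log (Stirling.stirlingSeq (n + 1)) - 1 / (12 * (n + 1 : ℝ)) := by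
  refine monotone_nat_of_le_succ fun n => ?_
  have step_le := Stirling.log_stirlingSeq_sdiff_le (n + 1)
  have telescope : (1 : ℝ) / (12 * (n + 1)) - 1 / (12 * (n + 1 + 1)) =
      1 / (12 * (n + 1) * (n + 1 + 1)) := by
    field_simp
    ring
  push_cast at step_le ⊢
  linarith

theorem stirlingSeq_le_sqrt_pi_mul_exp {n : ℕ} (hn : n ≠ 0) :
    Stirling.stirlingSeq n ≤ √π * Real.exp (1 / (12 * n)) := by
  obtain ⟨m, rfl⟩ := Nat.exists_eq_succ_of_ne_zero hn
  have limit : Tendsto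
      (fun n : ℕ => Real.log (Stirling.stirlingSeq (n + 1)) - 1 / (12 * (n + 1 : ℝ)))
      atTop (𝓝 (Real.log √π)) := by
    have correction := (tendsto_one_div_add_atTop_nhds_zero_nat (𝕜 := ℝ)).const_mul (1 / 12)
    have main := (Stirling.tendsto_stirlingSeq_sqrt_pi.comp (tendsto_add_atTop_nat 1)).log
      (by positivity)
    simpa [mul_comm] using main.sub correction
  have log_le := monotone_log_stirlingSeq_sub.ge_of_tendsto limit m
  rw [← Real.exp_log (Stirling.stirlingSeq'_pos m), ← Real.exp_log (by positivity : 0 < √π),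
    ← Real.exp_add, Real.exp_le_exp]
  push_cast
  linarith

theorem abs_stirlingSeq_div_sqrt_pi_sub_one_le {n : ℕ} (hn : n ≠ 0) :
    |Stirling.stirlingSeq n / √π - 1| ≤ 1 / n := by
  have hn' : (1 : ℝ) ≤ n := mod_cast Nat.one_le_iff_ne_zero.2 hn
  have ratio_ge : 1 ≤ Stirling.stirlingSeq n / √π :=
    (one_le_div (by positivity)).2 (Stirling.sqrt_pi_le_stirlingSeq hn)
  have ratio_le : Stirling.stirlingSeq n / √π ≤ Real.exp (1 / (12 * n)) :=
    (div_le_iff₀' (by positivity)).2 (stirlingSeq_le_sqrt_pi_mul_exp hn)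
  have exp_bound : |Real.exp (1 / (12 * n)) - 1| ≤ 2 * |1 / (12 * n : ℝ)| :=
    Real.abs_exp_sub_one_le <| by
      rw [abs_of_pos (by positivity), div_le_one (by positivity)]
      linarith
  rw [abs_of_pos (by positivity : (0 : ℝ) < 1 / (12 * n))] at exp_bound
  have slack : 2 * (1 / (12 * n : ℝ)) ≤ 1 / n := by
    field_simp
    norm_num
  rw [abs_of_nonneg (sub_nonneg.2 ratio_ge)]
  linarith [le_abs_self (Real.exp (1 / (12 * n)) - 1)]

end Stirling

section Factorization

open Complex
open scoped Real

variable {n : ℕ} {w : ℝ}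

lemma cexp_mul_cexp_circleMap_eq_mul_saddleIntegrand (hwn : w * Real.exp w = n) (t : ℝ) :
    exp (-(n * t * I)) * exp (exp (circleMap 0 w t) - 1 - circleMap 0 w t) =
      Real.exp (Real.exp w - 1 - w) * saddleIntegrand w t := by
  have bell_eq : (Real.exp w : ℂ) * poissonCharFun w t = exp (circleMap 0 w t) := by
    rw [poissonCharFun, ofReal_exp, ← exp_add, circleMap_zero]
    ring_nf
  have n_eq : (n : ℂ) = w * Real.exp w := mod_cast hwn.symm
  rw [saddleIntegrand, ofReal_exp (Real.exp w - 1 - w), ← exp_add, ← exp_add, mul_sub, bell_eq,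
    n_eq, circleMap_zero]
  push_cast
  ring_nf

theorem beta_eq_integral_saddleIntegrand (hw : 0 < w) (hwn : w * Real.exp w = n) :
    (beta n : ℂ) = (n.factorial / (2 * π * w ^ n) * Real.exp (Real.exp w - 1 - w) : ℝ) *
      ∫ t in -π..π, saddleIntegrand w t := by
  have entire : Differentiable ℂ fun z : ℂ => exp (exp z - 1 - z) := by fun_prop
  rw [← iteratedDeriv_cexp_cexp_sub_one_sub_id,
    iteratedDeriv_eq_integral_circleMap hw entire.differentiableOn]
  simp_rw [smul_eq_mul, cexp_mul_cexp_circleMap_eq_mul_saddleIntegrand hwn,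
    intervalIntegral.integral_const_mul]
  push_cast
  ring

lemma exp_mul_exp_eq_pow_div_pow (hw : 0 < w) (hwn : w * Real.exp w = n) :
    Real.exp (Real.exp w - 1 - w) * Real.exp (-((w + 1 / w - 1) * n) + w + 1) =
      w ^ n * Real.exp 1 ^ n / n ^ n := by
  have exp_eq : 1 / w * n = Real.exp w := by
    rw [← hwn]
    field_simp
  have pow_eq : (n : ℝ) ^ n = w ^ n * Real.exp (n * w) := by
    rw [Real.exp_nat_mul, ← mul_pow, hwn]
  rw [pow_eq, ← Real.exp_add, ← Real.exp_nat_mul, mul_div_mul_left _ _ (by positivity),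
    ← Real.exp_sub]
  congr 1
  linear_combination -exp_eq

lemma factorial_mul_exp_pow_div_pow_eq (hn : n ≠ 0) :
    n.factorial * Real.exp 1 ^ n / n ^ n = Stirling.stirlingSeq n * √(2 * n) := by
  rw [Stirling.stirlingSeq, div_pow]
  field_simp

lemma ne_zero_of_mul_exp_eq (hw : 0 < w) (hwn : w * Real.exp w = n) : n ≠ 0 := by
  rintro rfl
  exact (by positivity : w * Real.exp w ≠ 0) (by simpa using hwn)

lemma prefactor_eq_stirlingSeq_mul_sqrt (hw : 0 < w) (hwn : w * Real.exp w = n) :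
    n.factorial / (2 * π * w ^ n) * Real.exp (Real.exp w - 1 - w) *
        (√(w + 1) * Real.exp (-((w + 1 / w - 1) * n) + w + 1)) =
      Stirling.stirlingSeq n / √π * √(saddleCurvature w / (2 * π)) := by
  have sqrt_eq : √(2 * n) * √(w + 1) / (2 * π) = √(saddleCurvature w / (2 * π)) / √π := by
    have radicand_eq : saddleCurvature w / (2 * π) / π = 2 * n * (w + 1) / (2 * π) ^ 2 := by
      rw [saddleCurvature, ← hwn]
      field_simp
    rw [← Real.sqrt_div' _ (by positivity), radicand_eq, Real.sqrt_div' _ (by positivity),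
      Real.sqrt_sq (by positivity), Real.sqrt_mul (by positivity : (0 : ℝ) ≤ 2 * n)]
  calc _ = n.factorial / (2 * π * w ^ n) * √(w + 1) * (Real.exp (Real.exp w - 1 - w) *
        Real.exp (-((w + 1 / w - 1) * n) + w + 1)) := by ring
    _ = n.factorial * Real.exp 1 ^ n / n ^ n * √(w + 1) / (2 * π) := by
        rw [exp_mul_exp_eq_pow_div_pow hw hwn]
        field_simp
    _ = Stirling.stirlingSeq n * (√(2 * n) * √(w + 1) / (2 * π)) := by
        rw [factorial_mul_exp_pow_div_pow_eq (ne_zero_of_mul_exp_eq hw hwn)]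
        ring
    _ = _ := by
        rw [sqrt_eq]
        ring

theorem beta_mul_sqrt_mul_exp_eq (hw : 0 < w) (hwn : w * Real.exp w = n) :
    ((beta n * √(w + 1) * Real.exp (-((w + 1 / w - 1) * n) + w + 1) : ℝ) : ℂ) =
      (Stirling.stirlingSeq n / √π : ℝ) *
        (√(saddleCurvature w / (2 * π)) * ∫ t in -π..π, saddleIntegrand w t) := by
  rw [← mul_assoc, ← ofReal_mul, ← prefactor_eq_stirlingSeq_mul_sqrt hw hwn, mul_assoc,
    ofReal_mul, ofReal_natCast, beta_eq_integral_saddleIntegrand hw hwn, ofReal_mul _ (√_ * _)]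
  ring

theorem abs_beta_mul_sqrt_mul_exp_sub_one_le (hw : 0 < w) (hwn : w * Real.exp w = n) :
    |beta n * √(w + 1) * Real.exp (-((w + 1 / w - 1) * n) + w + 1) - 1| ≤
      2 * ‖(√(saddleCurvature w / (2 * π)) : ℂ) * (∫ t in -π..π, saddleIntegrand w t) - 1‖ +
        1 / n := by
  have hn := ne_zero_of_mul_exp_eq hw hwn
  have stirling := abs_stirlingSeq_div_sqrt_pi_sub_one_le hn
  have factorization := beta_mul_sqrt_mul_exp_eq hw hwn
  set S := Stirling.stirlingSeq n / √π
  set J := (√(saddleCurvature w / (2 * π)) : ℂ) * ∫ t in -π..π, saddleIntegrand w t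
  have stirling_le_two : |S| ≤ 2 := by
    have inv_le_one : (1 : ℝ) / n ≤ 1 := by
      rw [one_div]
      exact Nat.cast_inv_le_one n
    rw [abs_le] at stirling ⊢
    constructor <;> linarith
  rw [← Real.norm_eq_abs, ← norm_real, ofReal_sub, factorization, ofReal_one]
  calc ‖S * J - 1‖ = ‖S * (J - 1) + (S - 1 : ℝ)‖ := by
        push_cast
        ring_nf
    _ ≤ |S| * ‖J - 1‖ + |S - 1| := by
        refine (norm_add_le _ _).trans_eq ?_
        rw [norm_mul, norm_real, norm_real, Real.norm_eq_abs, Real.norm_eq_abs]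
    _ ≤ 2 * ‖J - 1‖ + 1 / n := by gcongr

end Factorization

section LambertW

variable {x w : ℝ}

lemma exp_neg_eq_div_of_mul_exp_eq (hw : w ≠ 0) (hwx : w * Real.exp w = x) :
    Real.exp (-w) = w / x := by
  rw [← hwx, Real.exp_neg]
  field_simp

lemma le_log_of_mul_exp_eq (hw : 1 ≤ w) (hwx : w * Real.exp w = x) : w ≤ Real.log x := by
  rw [← hwx, Real.log_mul (by positivity) (Real.exp_ne_zero w), Real.log_exp]
  exact le_add_of_nonneg_left (Real.log_nonneg hw)

lemma le_of_mul_exp_le_mul_exp {v : ℝ} (hw : 0 ≤ w) (h : v * Real.exp v ≤ w * Real.exp w) :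
    v ≤ w := by
  by_contra! hlt
  exact h.not_gt (by gcongr)

end LambertW

/-- Saddle-point asymptotics for `beta n`: with `w = W(n)` the positive solution
of `w * e^w = n`, `beta n = e^{(w + 1/w - 1)n - w - 1}/√(w+1) * (1 + O((log n)/n))`. -/
theorem beta_asymptotic :
    ∃ C : ℝ, 0 < C ∧ ∃ N : ℕ, ∀ n : ℕ, N ≤ n → ∀ w : ℝ, 0 < w → w * Real.exp w = n →
      |(beta n : ℝ) * Real.sqrt (w + 1) *
          Real.exp (-((w + 1 / w - 1) * n) + w + 1) - 1| ≤
        C * Real.log n / n := by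
  obtain ⟨C, C_pos, integral_bound⟩ :=
    sqrt_mul_integral_saddleIntegrand_sub_one_isBigO.exists_pos
  obtain ⟨v, hv⟩ :=
    Filter.eventually_atTop.1 (integral_bound.bound.and (Filter.eventually_ge_atTop 1))
  refine ⟨2 * C + 1, by positivity, ⌈v * Real.exp v⌉₊, fun n hn w hw hwn => ?_⟩
  have v_le : v ≤ w := le_of_mul_exp_le_mul_exp hw.le (hwn ▸ Nat.ceil_le.1 hn)
  obtain ⟨integral_le, one_le⟩ := hv w v_le
  rw [Real.norm_of_nonneg (Real.exp_pos _).le, exp_neg_eq_div_of_mul_exp_eq hw.ne' hwn]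
    at integral_le
  calc _ ≤ 2 * (C * (w / n)) + 1 / n :=
        (abs_beta_mul_sqrt_mul_exp_sub_one_le hw hwn).trans (by gcongr)
    _ ≤ 2 * (C * (w / n)) + w / n := by gcongr
    _ = (2 * C + 1) * w / n := by ring
    _ ≤ (2 * C + 1) * Real.log n / n := by
        gcongr
        exact le_log_of_mul_exp_eq one_le hwn
end

section
/- For every fixed integer ℓ ≥ 0 there exist a constant C > 0 and an integer N such that for all n ≥ N, if w > 0 is the unique positive real with w·e^w = n, then | (β_{n−ℓ}/β_n) · (n/w)^ℓ − 1 | ≤ C·(log n)/n; in particular β_{n−ℓ}/β_n is asymptotic to (W(n)/n)^ℓ. -/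
open Finset

/-!
By Dobiński's formula, `e * beta n = ∑ k, (k - 1) ^ n / k!`, which differs only by its first term
`(-1) ^ n` from the positive series `S n = ∑ k, k ^ n / (k + 1)!`. Put `r = S (n + 1) / S n`. The
estimate `exp (n / (k + 1)) ≤ (1 + 1 / k) ^ n ≤ exp (n / k)`, together with Jensen's inequality
(applied through tangent lines), gives `(r - 1) * log (r - 1) ≤ n ≤ (r + 1) * log (r + 1)`. Hence
`r` is within `1` of `exp (W n)`, and within a bounded distance of it when `n` is replaced by
`n - i` in `r` for a fixed `i`. The quotient `S n / S (n - ℓ)` is a product of `ℓ` such ratios,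
each equal to `exp (W n) = n / W n` up to a factor `1 + O(exp (-W n))`, and
`exp (-W n) = W n / n ≤ log n / n`.
-/

section Partitions

lemma parts_avoid_of_mem {α : Type*} [GeneralizedBooleanAlgebra α] [DecidableEq α] {a b : α}
    (P : Finpartition a) (hb : b ∈ P.parts) : (P.avoid b).parts = P.parts.erase b := by
  have sdiff_eq {d : α} (hd : d ∈ P.parts) (hdb : d ≠ b) : d \ b = d :=
    (P.disjoint hd hb hdb).sdiff_eq_left
  ext c
  simp only [Finpartition.mem_avoid, mem_erase]
  constructor
  · rintro ⟨d, hd, hdb, rfl⟩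
    have hne : d ≠ b := fun h => hdb h.le
    rw [sdiff_eq hd hne]
    exact ⟨hne, hd⟩
  · rintro ⟨hcb, hc⟩
    exact ⟨c, hc, fun h => P.ne_bot hc ((P.disjoint hc hb hcb).eq_bot_of_le h), sdiff_eq hc hcb⟩

variable {α : Type*} [DecidableEq α] (p : ℕ → Prop) [DecidablePred p]

/-- The partitions of the finite set `s` all of whose blocks have a cardinality satisfying `p`;
singleton-free partitions are the case `p = (2 ≤ ·)`. -/
def partitionsWithBlockCard (s : Finset α) : Finset (Finpartition s) :=
  {P | ∀ B ∈ P.parts, p #B}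

lemma mem_partitionsWithBlockCard {s : Finset α} {P : Finpartition s} :
    P ∈ partitionsWithBlockCard p s ↔ ∀ B ∈ P.parts, p #B := by
  simp [partitionsWithBlockCard]

lemma card_partitionsWithBlockCard_empty : #(partitionsWithBlockCard p (∅ : Finset α)) = 1 := by
  have parts_eq (P : Finpartition (∅ : Finset α)) : P.parts = ∅ := P.parts_eq_empty_iff.2 rfl
  refine card_eq_one.2 ⟨Finpartition.empty (Finset α), ?_⟩
  ext P
  simp [mem_partitionsWithBlockCard, Finpartition.ext_iff, parts_eq]

lemma card_filter_part_eq_insert {s t : Finset α} {a : α} (ha : a ∉ s) (hts : t ⊆ s)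
    (hp : p (#t + 1)) :
    #{P ∈ partitionsWithBlockCard p (insert a s) | P.part a = insert a t} =
      #(partitionsWithBlockCard p (s \ t)) := by
  have hat : a ∉ t := fun h => ha (hts h)
  have hdisj : Disjoint (s \ t) (insert a t) := by grind [disjoint_left]
  have hunion : s \ t ⊔ insert a t = insert a s := by grind
  have hsdiff : insert a s \ insert a t = s \ t := by grind
  have hnew (Q : Finpartition (s \ t)) : insert a t ∉ Q.parts := fun h =>
    ha (mem_sdiff.1 (Q.subset h (mem_insert_self a t))).1
  symm
  refine card_bij (fun Q _ => Q.extend (insert_ne_empty a t) hdisj hunion) ?_ ?_ ?_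
  · intro Q hQ
    rw [mem_filter, mem_partitionsWithBlockCard, Finpartition.extend_parts, forall_mem_insert,
      card_insert_of_notMem hat]
    exact ⟨⟨hp, (mem_partitionsWithBlockCard p).1 hQ⟩,
      Finpartition.part_eq_of_mem _ (mem_insert_self _ _) (mem_insert_self a t)⟩
  · intro Q _ R _ h
    have h : insert (insert a t) Q.parts = insert (insert a t) R.parts :=
      congrArg Finpartition.parts h
    ext1
    rw [← erase_insert (hnew Q), h, erase_insert (hnew R)]
  · intro P hP
    obtain ⟨hP, hPa⟩ := mem_filter.1 hP
    have hmem : insert a t ∈ P.parts := hPa ▸ P.part_mem.2 (mem_insert_self a s)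
    refine ⟨(P.avoid (insert a t)).copy hsdiff, ?_, ?_⟩
    · rw [mem_partitionsWithBlockCard, Finpartition.copy_parts, parts_avoid_of_mem P hmem]
      exact fun B hB => (mem_partitionsWithBlockCard p).1 hP B (mem_of_mem_erase hB)
    · ext1
      rw [Finpartition.extend_parts, Finpartition.copy_parts, parts_avoid_of_mem P hmem,
        insert_erase hmem]

lemma card_partitionsWithBlockCard_insert {s : Finset α} {a : α} (ha : a ∉ s) :
    #(partitionsWithBlockCard p (insert a s)) =
      ∑ t ∈ s.powerset with p (#t + 1), #(partitionsWithBlockCard p (s \ t)) := by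
  have hmaps : ∀ P ∈ partitionsWithBlockCard p (insert a s),
      (P.part a).erase a ∈ s.powerset.filter (fun t => p (#t + 1)) := by
    intro P hP
    have haP : a ∈ P.part a := P.mem_part (mem_insert_self a s)
    rw [mem_filter, mem_powerset, card_erase_add_one haP, ← subset_insert_iff]
    exact ⟨P.part_subset a,
      (mem_partitionsWithBlockCard p).1 hP _ (P.part_mem.2 (mem_insert_self a s))⟩
  rw [card_eq_sum_card_fiberwise hmaps]
  refine sum_congr rfl fun t ht => ?_
  obtain ⟨hts, hpt⟩ := mem_filter.1 ht
  rw [mem_powerset] at hts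
  rw [← card_filter_part_eq_insert p ha hts hpt]
  congr 1
  refine filter_congr fun P _ => ?_
  have haP : a ∈ P.part a := P.mem_part (mem_insert_self a s)
  exact erase_eq_iff_eq_insert haP fun h => ha (hts h)

lemma beta_eq_card (n : ℕ) :
    beta n = #(partitionsWithBlockCard (2 ≤ ·) (univ : Finset (Fin n))) := by
  rw [beta, ← Nat.card_eq_finsetCard]
  refine Nat.card_congr
    { toFun := fun P => ⟨Finpartition.ofExistsUnique P.1 (fun B _ => subset_univ B)
          (fun x _ => P.2.1.2 x) (fun h => not_nonempty_empty (P.2.1.1 ∅ h)),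
        (mem_partitionsWithBlockCard _).2 P.2.2⟩
      invFun := fun P => ⟨P.1.parts, ⟨fun _ => P.1.nonempty_of_mem_parts,
        fun x => P.1.existsUnique_mem (mem_univ x)⟩, (mem_partitionsWithBlockCard _).1 P.2⟩
      left_inv := fun _ => rfl
      right_inv := fun _ => rfl }

end Partitions

section Dobinski

open scoped Nat

lemma summable_add_pow_div_factorial (c : ℝ) (n : ℕ) :
    Summable (fun k : ℕ => ((k : ℝ) + c) ^ n / k !) := by
  refine .of_norm_bounded
    ((Real.summable_pow_div_factorial (Real.exp 1)).mul_left (n ! * Real.exp |c|)) fun k => ?_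
  have habs : |(k : ℝ) + c| ≤ |c| + k * 1 := by
    simpa [add_comm] using abs_add_le (k : ℝ) c
  have hpow : |(k : ℝ) + c| ^ n ≤ n ! * (Real.exp |c| * Real.exp 1 ^ k) := by
    rw [← Real.exp_nat_mul, ← Real.exp_add, ← div_le_iff₀' (by positivity)]
    exact (Real.pow_div_factorial_le_exp _ (abs_nonneg _) n).trans (Real.exp_le_exp.2 habs)
  rw [norm_div, norm_pow, Real.norm_eq_abs, RCLike.norm_natCast, mul_div_assoc', mul_assoc]
  gcongr

/-- Dobiński's series for singleton-free partitions, equal to `e * beta n`; up to the factor `e`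
it is the `n`-th central moment of the Poisson distribution of mean `1`. -/
noncomputable def dobinskiSum (n : ℕ) : ℝ := ∑' k : ℕ, ((k : ℝ) - 1) ^ n / k !

/-- `dobinskiSum n` without its term `(-1) ^ n` at `k = 0`, reindexed so that all the remaining
terms are nonnegative powers. -/
noncomputable def dobinskiTail (n : ℕ) : ℝ := ∑' k : ℕ, (k : ℝ) ^ n / (k + 1)!

lemma hasSum_dobinskiSum (n : ℕ) :
    HasSum (fun k : ℕ => ((k : ℝ) - 1) ^ n / k !) (dobinskiSum n) :=
  (summable_add_pow_div_factorial (-1) n).hasSum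

lemma hasSum_dobinskiTail (n : ℕ) :
    HasSum (fun k : ℕ => (k : ℝ) ^ n / (k + 1)!) (dobinskiTail n) := by
  have h := (summable_nat_add_iff 1).2 (hasSum_dobinskiSum n).summable
  simp only [Nat.cast_add, Nat.cast_one, add_sub_cancel_right] at h
  exact h.hasSum

lemma dobinskiSum_eq_dobinskiTail_add (n : ℕ) : dobinskiSum n = dobinskiTail n + (-1) ^ n := by
  rw [dobinskiSum, (hasSum_dobinskiSum n).summable.tsum_eq_zero_add, dobinskiTail]
  simp [add_comm]

lemma dobinskiSum_zero : dobinskiSum 0 = Real.exp 1 := by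
  simp [dobinskiSum, Real.exp_eq_exp_ℝ, NormedSpace.exp_eq_tsum_div]

lemma hasSum_pow_div_factorial_dobinskiTail (n : ℕ) :
    HasSum (fun k : ℕ => (k : ℝ) ^ n / k !) (dobinskiTail (n + 1) + dobinskiTail n) := by
  convert (hasSum_dobinskiTail (n + 1)).add (hasSum_dobinskiTail n) using 1
  ext k
  rw [Nat.factorial_succ]
  push_cast
  field_simp
  ring

lemma hasSum_pow_div_factorial_dobinskiSum (n : ℕ) :
    HasSum (fun k : ℕ => (k : ℝ) ^ n / k !)
      (∑ i ∈ range (n + 1), n.choose i * dobinskiSum i) := by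
  have hbinom (k : ℕ) : (k : ℝ) ^ n / k ! =
      ∑ i ∈ range (n + 1), n.choose i * (((k : ℝ) - 1) ^ i / k !) := by
    have hpow : (k : ℝ) ^ n = ∑ i ∈ range (n + 1), ((k : ℝ) - 1) ^ i * n.choose i := by
      simpa using add_pow ((k : ℝ) - 1) 1 n
    rw [hpow, sum_div]
    exact sum_congr rfl fun i _ => by ring
  simp_rw [hbinom]
  exact hasSum_sum fun i _ => (hasSum_dobinskiSum i).mul_left _

lemma dobinskiSum_succ_add (n : ℕ) :
    dobinskiSum (n + 1) + dobinskiSum n = ∑ i ∈ range (n + 1), n.choose i * dobinskiSum i := by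
  rw [(hasSum_pow_div_factorial_dobinskiSum n).unique (hasSum_pow_div_factorial_dobinskiTail n),
    dobinskiSum_eq_dobinskiTail_add, dobinskiSum_eq_dobinskiTail_add n]
  ring

lemma exp_one_mul_card_partitionsWithBlockCard {α : Type*} [DecidableEq α] (s : Finset α) :
    Real.exp 1 * #(partitionsWithBlockCard (2 ≤ ·) s) = dobinskiSum #s := by
  induction s using Finset.strongInduction with
  | H s ih =>
    rcases s.eq_empty_or_nonempty with rfl | ⟨a, has⟩
    · simp [card_partitionsWithBlockCard_empty, dobinskiSum_zero]
    obtain ⟨u, hau, rfl⟩ : ∃ u, a ∉ u ∧ insert a u = s :=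
      ⟨s.erase a, notMem_erase a s, insert_erase has⟩
    have hfilter : (u.powerset.filter fun t => 2 ≤ #t + 1) = u.powerset.erase ∅ := by
      ext t
      simp [Nat.one_le_iff_ne_zero, and_comm]
    have hblocks : Real.exp 1 * #(partitionsWithBlockCard (2 ≤ ·) (insert a u)) =
        ∑ t ∈ u.powerset.erase ∅, dobinskiSum (#u - #t) := by
      rw [card_partitionsWithBlockCard_insert _ hau, hfilter, Nat.cast_sum, mul_sum]
      refine sum_congr rfl fun t ht => ?_
      have htu : t ⊆ u := mem_powerset.1 (mem_of_mem_erase ht)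
      rw [ih (u \ t) (sdiff_subset.trans_ssubset (ssubset_insert hau)), card_sdiff_of_subset htu]
    have hall : ∑ t ∈ u.powerset, dobinskiSum (#u - #t) =
        ∑ i ∈ range (#u + 1), (#u).choose i * dobinskiSum i := by
      rw [sum_powerset_apply_card fun k => dobinskiSum (#u - k), ← sum_range_reflect]
      refine sum_congr rfl fun i hi => ?_
      have hi : i ≤ #u := Nat.lt_succ_iff.1 (mem_range.1 hi)
      rw [Nat.add_sub_cancel, Nat.sub_sub_self hi, Nat.choose_symm hi, nsmul_eq_mul]
    rw [hblocks, card_insert_of_notMem hau, sum_erase_eq_sub (empty_mem_powerset u), hall,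
      ← dobinskiSum_succ_add, card_empty, Nat.sub_zero, add_sub_cancel_right]

lemma exp_one_mul_beta (n : ℕ) : Real.exp 1 * beta n = dobinskiSum n := by
  rw [beta_eq_card, exp_one_mul_card_partitionsWithBlockCard, card_univ, Fintype.card_fin]

lemma two_pow_le_dobinskiTail (n : ℕ) : 2 ^ n / 6 ≤ dobinskiTail n := by
  have h := le_hasSum (hasSum_dobinskiTail n) 2 fun k _ => by positivity
  norm_num [Nat.factorial] at h
  exact h

lemma dobinskiTail_pos (n : ℕ) : 0 < dobinskiTail n :=
  lt_of_lt_of_le (by positivity) (two_pow_le_dobinskiTail n)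

end Dobinski

section RatioBounds

open scoped Nat

lemma pow_mul_exp_div_add_one_le {t : ℝ} (ht : 0 ≤ t) (n : ℕ) :
    t ^ n * Real.exp (n / (t + 1)) ≤ (t + 1) ^ n := by
  have hbase : t * Real.exp (1 / (t + 1)) ≤ t + 1 := by
    rw [← le_div_iff₀ (Real.exp_pos _), div_eq_mul_inv, ← Real.exp_neg]
    calc t = (t + 1) * (1 - 1 / (t + 1)) := by field_simp; ring
      _ ≤ (t + 1) * Real.exp (-(1 / (t + 1))) := by gcongr; exact Real.one_sub_le_exp_neg _
  calc t ^ n * Real.exp (n / (t + 1)) = (t * Real.exp (1 / (t + 1))) ^ n := by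
        rw [mul_pow, ← Real.exp_nat_mul, mul_one_div]
    _ ≤ (t + 1) ^ n := by gcongr

lemma add_one_pow_mul_exp_neg_div_le {t : ℝ} (ht : 0 < t) (n : ℕ) :
    (t + 1) ^ n * Real.exp (-(n / t)) ≤ t ^ n := by
  have hbase : (t + 1) * Real.exp (-(1 / t)) ≤ t := by
    rw [Real.exp_neg, ← div_eq_mul_inv, div_le_iff₀ (Real.exp_pos _)]
    calc t + 1 = t * (1 / t + 1) := by field_simp; ring
      _ ≤ t * Real.exp (1 / t) := by gcongr; exact Real.add_one_le_exp _
  calc (t + 1) ^ n * Real.exp (-(n / t)) = ((t + 1) * Real.exp (-(1 / t))) ^ n := by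
        rw [mul_pow, ← Real.exp_nat_mul, mul_neg, mul_one_div]
    _ ≤ t ^ n := by gcongr

lemma exp_div_mul_tangent_le {a x y : ℝ} (ha : 0 ≤ a) (hx : 0 < x) (hy : 0 < y) :
    Real.exp (a / x) * (1 + a / x - a / x ^ 2 * y) ≤ Real.exp (a / y) := by
  have hinv : a / x - a / x ^ 2 * y ≤ a / y - a / x := by
    have hsq : a / y - a / x - (a / x - a / x ^ 2 * y) = a * (x - y) ^ 2 / (x ^ 2 * y) := by
      field_simp
    have : 0 ≤ a * (x - y) ^ 2 / (x ^ 2 * y) := by positivity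
    linarith
  calc Real.exp (a / x) * (1 + a / x - a / x ^ 2 * y)
      ≤ Real.exp (a / x) * Real.exp (a / y - a / x) := by
        gcongr
        linarith [Real.add_one_le_exp (a / y - a / x)]
    _ = Real.exp (a / y) := by rw [← Real.exp_add, add_sub_cancel]

lemma tangent_le_exp_div_mul {y : ℝ} (a x : ℝ) (hy : 0 < y) :
    (1 + a / x) * y - a ≤ Real.exp (a / x) * (y * Real.exp (-(a / y))) := by
  calc (1 + a / x) * y - a = y * (a / x + -(a / y) + 1) := by field_simp; ring
    _ ≤ y * Real.exp (a / x + -(a / y)) := by gcongr; exact Real.add_one_le_exp _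
    _ = Real.exp (a / x) * (y * Real.exp (-(a / y))) := by rw [Real.exp_add]; ring

lemma add_one_pow_mul_tangent_le {n : ℕ} (hn : n ≠ 0) (x : ℝ) (k : ℕ) :
    ((k : ℝ) + 1) ^ n * ((1 + n / x) * k - n) ≤ Real.exp (n / x) * ((k + 2) * (k : ℝ) ^ n) := by
  rcases k.eq_zero_or_pos with rfl | hk
  · simp [hn]
  have hk : (0 : ℝ) < k := Nat.cast_pos.2 hk
  calc ((k : ℝ) + 1) ^ n * ((1 + n / x) * k - n)
      ≤ ((k : ℝ) + 1) ^ n * (Real.exp (n / x) * (k * Real.exp (-(n / k)))) := by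
        gcongr
        exact tangent_le_exp_div_mul n x hk
    _ = Real.exp (n / x) * (k * (((k : ℝ) + 1) ^ n * Real.exp (-(n / k)))) := by ring
    _ ≤ Real.exp (n / x) * ((k + 2) * (k : ℝ) ^ n) := by
        gcongr
        · linarith
        · exact add_one_pow_mul_exp_neg_div_le hk n

lemma hasSum_add_one_pow_div_factorial {n : ℕ} (hn : n ≠ 0) :
    HasSum (fun k : ℕ => ((k : ℝ) + 1) ^ n / (k + 1)!)
      (dobinskiTail (n + 1) + dobinskiTail n) := by
  simpa [hn] using (hasSum_nat_add_iff' 1).2 (hasSum_pow_div_factorial_dobinskiTail n)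

lemma hasSum_dobinskiTail_shift {n : ℕ} (hn : n ≠ 0) :
    HasSum (fun k : ℕ => ((k : ℝ) + 1) ^ n / (k + 2)!) (dobinskiTail n) := by
  simpa [hn] using (hasSum_nat_add_iff' 1).2 (hasSum_dobinskiTail n)

-- Jensen's inequality for `y ↦ exp (n / y)` and the weights `k ^ n / (k + 1)!`, which give
-- `y = k + 1` the mean `dobinskiTail (n + 1) / dobinskiTail n + 1`.
lemma mul_dobinskiTail_le {n : ℕ} (hn : n ≠ 0) {x : ℝ} (hx : 0 < x) (hxn : x ≤ Real.exp (n / x)) :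
    x * dobinskiTail n ≤ dobinskiTail (n + 1) + dobinskiTail n := by
  have hterm (k : ℕ) :
      Real.exp (n / x) * ((1 + n / x) * ((k : ℝ) ^ n / (k + 1)!) -
        n / x ^ 2 * ((k : ℝ) ^ (n + 1) / (k + 1)! + (k : ℝ) ^ n / (k + 1)!)) ≤
      ((k : ℝ) + 1) ^ n / (k + 1)! :=
    calc _ = (k : ℝ) ^ n * (Real.exp (n / x) * (1 + n / x - n / x ^ 2 * (k + 1))) / (k + 1)! := by
          ring
      _ ≤ (k : ℝ) ^ n * Real.exp (n / (k + 1)) / (k + 1)! := by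
          gcongr
          exact exp_div_mul_tangent_le n.cast_nonneg hx k.cast_add_one_pos
      _ ≤ ((k : ℝ) + 1) ^ n / (k + 1)! := by
          gcongr
          exact pow_mul_exp_div_add_one_le k.cast_nonneg n
  have htangent := hasSum_le hterm
    ((((hasSum_dobinskiTail n).mul_left _).sub (((hasSum_dobinskiTail (n + 1)).add
      (hasSum_dobinskiTail n)).mul_left _)).mul_left _) (hasSum_add_one_pow_div_factorial hn)
  set z := dobinskiTail (n + 1) + dobinskiTail n
  by_contra! hlt
  have hslope : n / x ^ 2 * z ≤ n / x * dobinskiTail n :=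
    calc n / x ^ 2 * z ≤ n / x ^ 2 * (x * dobinskiTail n) := by gcongr
      _ = n / x * dobinskiTail n := by field_simp
  have hge : x * dobinskiTail n ≤ z :=
    calc x * dobinskiTail n ≤ Real.exp (n / x) * dobinskiTail n := by
          gcongr
          exact (dobinskiTail_pos n).le
      _ ≤ Real.exp (n / x) * ((1 + n / x) * dobinskiTail n - n / x ^ 2 * z) := by
          gcongr
          linarith
      _ ≤ z := htangent
  exact hge.not_gt hlt

-- Jensen's inequality for `y ↦ y * exp (-n / y)` and the weights `(k + 1) ^ n / (k + 2)!`, which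
-- give `y = k` the mean `dobinskiTail (n + 1) / dobinskiTail n - 1`.
lemma dobinskiTail_succ_le {n : ℕ} (hn : n ≠ 0) {x : ℝ} (hx : 0 < x) (hxn : Real.exp (n / x) ≤ x) :
    dobinskiTail (n + 1) ≤ (x + 1) * dobinskiTail n := by
  have hterm (k : ℕ) :
      (1 + n / x) * (((k : ℝ) + 1) ^ (n + 1) / (k + 2)! - ((k : ℝ) + 1) ^ n / (k + 2)!) -
        n * (((k : ℝ) + 1) ^ n / (k + 2)!) ≤
      Real.exp (n / x) * ((k : ℝ) ^ n / (k + 1)!) :=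
    calc _ = ((k : ℝ) + 1) ^ n * ((1 + n / x) * k - n) / (k + 2)! := by ring
      _ ≤ Real.exp (n / x) * ((k + 2) * (k : ℝ) ^ n) / (k + 2)! :=
          div_le_div_of_nonneg_right (add_one_pow_mul_tangent_le hn x k) (by positivity)
      _ = Real.exp (n / x) * ((k : ℝ) ^ n / (k + 1)!) := by
          rw [Nat.factorial_succ (k + 1)]
          push_cast
          field_simp
          ring
  have htangent := hasSum_le hterm
    ((((hasSum_dobinskiTail_shift n.succ_ne_zero).sub (hasSum_dobinskiTail_shift hn)).mul_left
      _).sub ((hasSum_dobinskiTail_shift hn).mul_left _)) ((hasSum_dobinskiTail n).mul_left _)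
  have hscaled : (1 + n / x) * (dobinskiTail (n + 1) - dobinskiTail n) ≤
      (1 + n / x) * (x * dobinskiTail n) :=
    calc _ ≤ Real.exp (n / x) * dobinskiTail n + n * dobinskiTail n := by linarith
      _ ≤ x * dobinskiTail n + n * dobinskiTail n := by
          gcongr
          exact (dobinskiTail_pos n).le
      _ = (1 + n / x) * (x * dobinskiTail n) := by field_simp
  linarith [le_of_mul_le_mul_left hscaled (by positivity)]

lemma abs_dobinskiTail_succ_div_sub_one_le {n : ℕ} (hn : n ≠ 0) {i w : ℝ} (hi : 0 ≤ i)
    (hw : 1 ≤ w) (h : w * Real.exp w = n + i) :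
    |dobinskiTail (n + 1) / (dobinskiTail n * Real.exp w) - 1| ≤ (i + 1) * (Real.exp w)⁻¹ := by
  set x := Real.exp w
  have hx0 : 0 < x := Real.exp_pos w
  have hpos := dobinskiTail_pos n
  have hupper : dobinskiTail (n + 1) ≤ (x + 1) * dobinskiTail n := by
    refine dobinskiTail_succ_le hn hx0 (Real.exp_le_exp.2 ?_)
    rw [div_le_iff₀ hx0]
    linarith
  have hlower : (x - i) * dobinskiTail n ≤ dobinskiTail (n + 1) + dobinskiTail n := by
    rcases le_or_gt (x - i) 0 with hxi | hxi
    · have := mul_nonpos_of_nonpos_of_nonneg hxi hpos.le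
      linarith [dobinskiTail_pos (n + 1)]
    · refine mul_dobinskiTail_le hn hxi ?_
      calc x - i ≤ x := sub_le_self x hi
        _ ≤ Real.exp (n / (x - i)) := by
          refine Real.exp_le_exp.2 ?_
          rw [le_div_iff₀ hxi]
          nlinarith
  have hsplit : dobinskiTail (n + 1) / (dobinskiTail n * x) - 1 =
      (dobinskiTail (n + 1) - x * dobinskiTail n) / dobinskiTail n * x⁻¹ := by
    field_simp
  rw [hsplit, abs_mul, abs_div, abs_of_pos hpos, abs_of_pos (inv_pos.2 hx0)]
  gcongr
  rw [div_le_iff₀ hpos, abs_le]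
  constructor <;> nlinarith [mul_nonneg hi hpos.le]

end RatioBounds

section Asymptotics

open Filter Asymptotics Topology

section MulInv

variable {α 𝕜 E : Type*} [NormedField 𝕜] [NormedAddCommGroup E] {l : Filter α} {f h : α → 𝕜}
  {g : α → E}

lemma tendsto_one_of_isBigO_sub_one (hf : (fun a => f a - 1) =O[l] g) (hg : Tendsto g l (𝓝 0)) :
    Tendsto f l (𝓝 1) := by
  simpa using (hf.trans_tendsto hg).add_const 1

lemma isBigO_mul_sub_one (hf : (fun a => f a - 1) =O[l] g) (hh : (fun a => h a - 1) =O[l] g)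
    (hg : Tendsto g l (𝓝 0)) : (fun a => f a * h a - 1) =O[l] g := by
  have hbdd : f =O[l] (fun _ => (1 : ℝ)) := (tendsto_one_of_isBigO_sub_one hf hg).isBigO_one ℝ
  have hprod : (fun a => f a * (h a - 1)) =O[l] g := by
    simpa using (hbdd.mul hh.norm_right).norm_right
  refine (hprod.add hf).congr_left fun a => ?_
  ring

lemma isBigO_inv_sub_one (hf : (fun a => f a - 1) =O[l] g) (hg : Tendsto g l (𝓝 0)) :
    (fun a => (f a)⁻¹ - 1) =O[l] g := by
  have hlim := tendsto_one_of_isBigO_sub_one hf hg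
  have hbdd : (fun a => (f a)⁻¹) =O[l] (fun _ => (1 : ℝ)) :=
    (hlim.inv₀ one_ne_zero).isBigO_one ℝ
  have hprod : (fun a => (f a)⁻¹ * (f a - 1)) =O[l] g := by
    simpa using (hbdd.mul hf.norm_right).norm_right
  refine hprod.neg_left.congr' ?_ .rfl
  filter_upwards [hlim.eventually_ne one_ne_zero] with a ha
  field_simp
  ring

end MulInv

/-- The filter `n → ∞` on the pairs `(n, w)` for which `w` is the Lambert value `W n`, that is, the
positive solution of `w * exp w = n`. -/
def lambertAtTop : Filter (ℕ × ℝ) :=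
  comap Prod.fst atTop ⊓ 𝓟 {p | 0 < p.2 ∧ p.2 * Real.exp p.2 = p.1}

lemma eventually_lambertAtTop {Q : ℕ × ℝ → Prop} :
    (∀ᶠ p in lambertAtTop, Q p) ↔
      ∃ N : ℕ, ∀ n, N ≤ n → ∀ w : ℝ, 0 < w → w * Real.exp w = n → Q (n, w) := by
  simp only [lambertAtTop, eventually_inf_principal, eventually_comap, eventually_atTop,
    Set.mem_ofPred_eq, Prod.forall]
  refine exists_congr fun N => ⟨fun h n hn w hw hwn => h n hn n w rfl ⟨hw, hwn⟩, ?_⟩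
  rintro h n hn _ w rfl ⟨hw, hwn⟩
  exact h _ hn w hw hwn

lemma eventually_lambertAtTop_mul_exp :
    ∀ᶠ p in lambertAtTop, p.2 * Real.exp p.2 = p.1 :=
  eventually_lambertAtTop.2 ⟨0, fun _ _ _ _ h => h⟩

lemma tendsto_fst_lambertAtTop : Tendsto Prod.fst lambertAtTop atTop :=
  tendsto_comap.mono_left inf_le_left

lemma tendsto_exp_lambertAtTop : Tendsto (fun p => Real.exp p.2) lambertAtTop atTop := by
  have hsqrt : Tendsto (fun p : ℕ × ℝ => √(p.1 : ℝ)) lambertAtTop atTop :=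
    Real.tendsto_sqrt_atTop.comp (tendsto_natCast_atTop_atTop.comp tendsto_fst_lambertAtTop)
  refine tendsto_atTop_mono' _ ?_ hsqrt
  filter_upwards [eventually_lambertAtTop_mul_exp] with p hp
  rw [← hp, Real.sqrt_le_left (Real.exp_pos _).le, sq]
  gcongr
  linarith [Real.add_one_le_exp p.2]

lemma tendsto_inv_exp_lambertAtTop : Tendsto (fun p => (Real.exp p.2)⁻¹) lambertAtTop (𝓝 0) :=
  tendsto_exp_lambertAtTop.inv_tendsto_atTop

lemma eventually_lambertAtTop_one_le : ∀ᶠ p in lambertAtTop, 1 ≤ p.2 := by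
  filter_upwards [tendsto_exp_lambertAtTop.eventually_ge_atTop (Real.exp 1)] with p hp
  exact Real.exp_le_exp.1 hp

lemma inv_exp_isBigO_log_div :
    (fun p : ℕ × ℝ => (Real.exp p.2)⁻¹) =O[lambertAtTop] fun p => Real.log p.1 / p.1 := by
  refine .of_bound' ?_
  filter_upwards [eventually_lambertAtTop_mul_exp, eventually_lambertAtTop_one_le] with p hp hw
  have hlog : p.2 ≤ Real.log p.1 := by
    rw [← hp, Real.log_mul (by positivity) (Real.exp_ne_zero _), Real.log_exp]
    linarith [Real.log_nonneg hw]
  have hinv : (Real.exp p.2)⁻¹ = p.2 / p.1 := by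
    rw [← hp]
    field_simp
  rw [hinv, Real.norm_of_nonneg (by positivity), Real.norm_of_nonneg (by positivity)]
  gcongr

lemma dobinskiTail_div_isBigO (ℓ : ℕ) :
    (fun p : ℕ × ℝ => dobinskiTail p.1 / (dobinskiTail (p.1 - ℓ) * Real.exp p.2 ^ ℓ) - 1)
      =O[lambertAtTop] fun p => (Real.exp p.2)⁻¹ := by
  induction ℓ with
  | zero =>
    simp [(dobinskiTail_pos _).ne', isBigO_zero]
  | succ ℓ ih =>
    have hstep : (fun p : ℕ × ℝ => dobinskiTail (p.1 - ℓ) /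
        (dobinskiTail (p.1 - (ℓ + 1)) * Real.exp p.2) - 1)
        =O[lambertAtTop] fun p => (Real.exp p.2)⁻¹ := by
      refine .of_bound (((ℓ + 1 : ℕ) : ℝ) + 1) ?_
      filter_upwards [eventually_lambertAtTop_mul_exp, eventually_lambertAtTop_one_le,
        tendsto_fst_lambertAtTop.eventually_gt_atTop (ℓ + 1)] with ⟨n, w⟩ hp hw hn
      obtain ⟨m, rfl⟩ : ∃ m, n = m + (ℓ + 1) := ⟨n - (ℓ + 1), by lia⟩
      rw [Nat.add_sub_cancel, show m + (ℓ + 1) - ℓ = m + 1 by lia, Real.norm_eq_abs,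
        Real.norm_of_nonneg (by positivity)]
      exact abs_dobinskiTail_succ_div_sub_one_le (by lia) (Nat.cast_nonneg _) hw (by simpa using hp)
    refine (isBigO_mul_sub_one ih hstep tendsto_inv_exp_lambertAtTop).congr_left fun p => ?_
    have hpos := (dobinskiTail_pos (p.1 - ℓ)).ne'
    rw [pow_succ]
    field_simp

lemma dobinskiSum_div_dobinskiTail_isBigO (i : ℕ) :
    (fun p : ℕ × ℝ => dobinskiSum (p.1 - i) / dobinskiTail (p.1 - i) - 1)
      =O[lambertAtTop] fun p => (Real.exp p.2)⁻¹ := by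
  refine .of_bound (6 * (i + 1)) ?_
  filter_upwards [eventually_lambertAtTop_mul_exp, eventually_lambertAtTop_one_le,
    tendsto_fst_lambertAtTop.eventually_ge_atTop i] with ⟨n, w⟩ hp hw hn
  obtain ⟨m, rfl⟩ : ∃ m, n = m + i := ⟨n - i, by lia⟩
  rw [Nat.add_sub_cancel]
  have hpos := dobinskiTail_pos m
  have hexp : Real.exp w ≤ 6 * (i + 1) * dobinskiTail m :=
    calc Real.exp w ≤ w * Real.exp w := le_mul_of_one_le_left (Real.exp_pos w).le hw
      _ = m + i := by simpa using hp
      _ ≤ (i + 1) * (m + 1) := by nlinarith [m.cast_nonneg (α := ℝ), i.cast_nonneg (α := ℝ)]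
      _ ≤ (i + 1) * 2 ^ m := by gcongr; exact_mod_cast Nat.lt_two_pow_self
      _ ≤ (i + 1) * (6 * dobinskiTail m) := by gcongr; linarith [two_pow_le_dobinskiTail m]
      _ = 6 * (i + 1) * dobinskiTail m := by ring
  have herror : ‖dobinskiSum m / dobinskiTail m - 1‖ = (dobinskiTail m)⁻¹ := by
    rw [dobinskiSum_eq_dobinskiTail_add, add_div, div_self hpos.ne', add_sub_cancel_left, norm_div,
      norm_pow, norm_neg, norm_one, one_pow, one_div, Real.norm_of_nonneg hpos.le]
  rw [herror, Real.norm_of_nonneg (by positivity), ← div_eq_mul_inv,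
    inv_le_comm₀ hpos (by positivity), inv_div, div_le_iff₀' (by positivity)]
  exact hexp

lemma beta_div_isBigO (ℓ : ℕ) :
    (fun p : ℕ × ℝ => (beta (p.1 - ℓ) : ℝ) / beta p.1 * Real.exp p.2 ^ ℓ - 1)
      =O[lambertAtTop] fun p => (Real.exp p.2)⁻¹ := by
  have hg := tendsto_inv_exp_lambertAtTop
  have hsum := isBigO_mul_sub_one (dobinskiSum_div_dobinskiTail_isBigO ℓ)
    (isBigO_inv_sub_one (dobinskiSum_div_dobinskiTail_isBigO 0) hg) hg
  have htail := isBigO_inv_sub_one (dobinskiTail_div_isBigO ℓ) hg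
  refine (isBigO_mul_sub_one hsum htail hg).congr_left fun p => ?_
  have hpos := (dobinskiTail_pos p.1).ne'
  have hpos' := (dobinskiTail_pos (p.1 - ℓ)).ne'
  have he := (Real.exp_pos 1).ne'
  rw [Nat.sub_zero, ← exp_one_mul_beta, ← exp_one_mul_beta]
  field_simp

end Asymptotics

/-- For every fixed `ℓ ≥ 0`: with `w = W(n)` the positive solution of
`w * e^w = n`, `beta (n - ℓ) / beta n = (w/n)^ℓ * (1 + O((log n)/n))`. -/
theorem beta_ratio_asymptotic (ℓ : ℕ) :
    ∃ C : ℝ, 0 < C ∧ ∃ N : ℕ, ∀ n : ℕ, N ≤ n → ∀ w : ℝ, 0 < w → w * Real.exp w = n →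
      |((beta (n - ℓ) : ℝ) / (beta n : ℝ)) * ((n : ℝ) / w) ^ ℓ - 1| ≤
        C * Real.log n / n := by
  obtain ⟨C, hC, hbound⟩ := ((beta_div_isBigO ℓ).trans inv_exp_isBigO_log_div).exists_pos
  obtain ⟨N, hN⟩ := eventually_lambertAtTop.1 hbound.bound
  refine ⟨C, hC, N, fun n hn w hw hwn => ?_⟩
  have hratio : (n : ℝ) / w = Real.exp w := by rw [← hwn, mul_div_cancel_left₀ _ hw.ne']
  have hnonneg : 0 ≤ Real.log n / n := by positivity
  have h := hN n hn w hw hwn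
  rwa [Real.norm_eq_abs, Real.norm_of_nonneg hnonneg, ← mul_div_assoc, ← hratio] at h
end
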